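/- arXiv:2209.07927 — 2 statements merged into one kernel-verified Lean document; each statement's English description precedes it below -/
import Mathlib

section
/- Let q be a prime power and n a positive integer. If a subset Y of GL(n,q) is (σ,τ)-transitive for some (σ,τ) ∈ Θ_{n,q}, then Y is (σ̂,τ̂)-transitive for every (σ̂,τ̂) ∈ Θ_{n,q} with (σ,τ) ⪯ (σ̂,τ̂), i.e. such that σ̂ refines σ and τ ⊴ τ̂. -/
open Module

/-- The linear automorphism of `F_q^n` induced by `g ∈ GL(n,q)`. -/
def glMap (F : Type) [Field F] {n : ℕ} (g : GL (Fin n) F) : (Fin n → F) →ₗ[F] (Fin n → F) :=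
  Matrix.mulVecLin (g : Matrix (Fin n) (Fin n) F)

/-- An element `α = (ρ, I)` of `Σ_{n,q}`: a composition `ρ` of `n` together with a set `I` of
indices of parts of `ρ`, where for `q = 2` every part not indexed by `I` must exceed `1`. -/
structure SigmaNQ (q n : ℕ) where
  ρ : Composition n
  I : Finset (Fin ρ.length)
  two : q = 2 → ∀ i ∉ I, 1 < ρ.blocksFun i

/-- The first component `σ` of the type of `α = (ρ,I)`: the multiset of parts `ρ_i` with
`i ∈ I` (a partition, recorded as an unordered multiset of parts). -/
def SigmaNQ.typeSigma {q n : ℕ} (α : SigmaNQ q n) : Multiset ℕ :=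
  α.I.val.map α.ρ.blocksFun

/-- The second component `τ` of the type of `α = (ρ,I)`: the multiset of parts `ρ_i` with
`i ∉ I` (a partition, recorded as an unordered multiset of parts). -/
def SigmaNQ.typeTau {q n : ℕ} (α : SigmaNQ q n) : Multiset ℕ :=
  α.Iᶜ.val.map α.ρ.blocksFun

/-- An `α`-flag for `α = (ρ,I) ∈ Σ_{n,q}`: a `ρ`-flag `{0} = V_0 ≤ V_1 ≤ ⋯ ≤ V_k = F_q^n`
with `dim(V_i/V_{i−1}) = ρ_i`, together with, for each `i ∈ I`, an ordered basis of the
quotient `V_i/V_{i−1}`, recorded by a tuple of `ρ_i` representatives in `V_i` whose classes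
modulo `V_{i−1}` are linearly independent (hence a basis of `V_i/V_{i−1}`). -/
structure AlphaFlag (F : Type) [Field F] {q n : ℕ} (α : SigmaNQ q n) where
  V : Fin (α.ρ.length + 1) → Submodule F (Fin n → F)
  mono : Monotone V
  bot_eq : V 0 = ⊥
  top_eq : V (Fin.last α.ρ.length) = ⊤
  dim : ∀ i : Fin α.ρ.length,
    finrank F (V i.succ) = finrank F (V i.castSucc) + α.ρ.blocksFun i
  B : ∀ i : Fin α.ρ.length, i ∈ α.I → Fin (α.ρ.blocksFun i) → (Fin n → F)
  B_mem : ∀ i hi m, B i hi m ∈ V i.succ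
  B_indep : ∀ i hi,
    LinearIndependent F (fun m => (V i.castSucc).mkQ (B i hi m))

/-- `g ∈ GL(n,q)` maps the `α`-flag `A` to the `α`-flag `C`: it maps the subspaces of `A`
to those of `C`, and the basis representatives of `A` to representatives of the same classes
as those of `C` (i.e. `g` maps the induced bases of the quotients to each other). -/
def MapsAlphaFlag (F : Type) [Field F] {q n : ℕ} {α : SigmaNQ q n} (g : GL (Fin n) F)
    (A C : AlphaFlag F α) : Prop :=
  (∀ j, Submodule.map (glMap F g) (A.V j) = C.V j) ∧
  (∀ i hi m, glMap F g (A.B i hi m) - C.B i hi m ∈ C.V i.castSucc)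

/-- A subset `Y` of `GL(n,q)` is transitive on `α`-flags: there is a constant `r` such that
for all `α`-flags `A`, `C` there are exactly `r` elements `g ∈ Y` mapping `A` to `C`. -/
def TransitiveOnAlphaFlags (F : Type) [Field F] [Fintype F] {q n : ℕ} (Y : Set (GL (Fin n) F))
    (α : SigmaNQ q n) : Prop :=
  ∃ r : ℕ, ∀ A C : AlphaFlag F α,
    Nat.card {g : GL (Fin n) F // g ∈ Y ∧ MapsAlphaFlag F g A C} = r


/-- The sum of the `k` largest entries of a multiset of natural numbers. For a partition
regarded as a multiset of parts, this is the `k`-th partial sum `λ_1 + ⋯ + λ_k` of the parts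
arranged in nonincreasing order. -/
def kLargestSum (μ : Multiset ℕ) (k : ℕ) : ℕ :=
  ((μ.powerset.filter (fun s => Multiset.card s ≤ k)).map Multiset.sum).sup

/-- Dominance order on partitions (as multisets of parts): `μ ⊴ λ` iff for every `k` the sum
of the `k` largest parts of `μ` is at most the sum of the `k` largest parts of `λ`. -/
def Dominates (μ lam : Multiset ℕ) : Prop :=
  ∀ k : ℕ, kLargestSum μ k ≤ kLargestSum lam k

/-- `κ` refines `ν` if `|κ| ≤ |ν|` and the multiset consisting of the parts of `κ` together
with `|ν| − |κ|` additional parts equal to `1` can be split into groups whose sums are exactly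
the parts of `ν`. -/
def Refines (κ ν : Multiset ℕ) : Prop :=
  κ.sum ≤ ν.sum ∧ ∃ M : Multiset (Multiset ℕ),
    M.sum = κ + Multiset.replicate (ν.sum - κ.sum) 1 ∧ M.map Multiset.sum = ν

/-- `(σ,τ) ∈ Θ_{n,q}`: `σ` and `τ` are partitions (multisets of positive parts) with
`|σ| + |τ| = n` such that, if `q = 2`, every part of `τ` is greater than `1`. -/
def InTheta (q n : ℕ) (σ τ : Multiset ℕ) : Prop :=
  (∀ p ∈ σ, 0 < p) ∧ (∀ p ∈ τ, 0 < p) ∧ σ.sum + τ.sum = n ∧ (q = 2 → ∀ p ∈ τ, 1 < p)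

/-- `Y ⊆ GL(n,q)` is `(σ,τ)`-transitive if it is transitive on `α`-flags for some
`α ∈ Σ_{n,q}` of type `(σ,τ)`. -/
def STTransitive (F : Type) [Field F] [Fintype F] (q n : ℕ) (Y : Set (GL (Fin n) F))
    (σ τ : Multiset ℕ) : Prop :=
  ∃ α : SigmaNQ q n, α.typeSigma = σ ∧ α.typeTau = τ ∧ TransitiveOnAlphaFlags F Y α

/-!
Transitivity of `Y` on flags of a given type says that the centred indicator function of `Y` has
vanishing sums over all two-sided translates of the stabilizer of one flag. For the standard flag,
this is a group of block triangular matrices in which the diagonal blocks of the tagged parts are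
trivial. By a sum-of-squares identity the condition depends on the subgroup only through its
permutation character. As every matrix is similar to its transpose, transposing the group of two
adjacent blocks exchanges them without changing this character, so the order of the parts is
irrelevant. Splitting a tagged part and removing a tag both enlarge the subgroup. Finally, one unit
may be moved from a part to one at least as large, because the inclusion matrix between the
subspaces of dimensions `k` and `k + 1` of a space of dimension greater than `2 * k` is injective;
such moves generate the dominance order.
-/

section CosetBalanced

variable {G : Type*} [Group G] {φ : G → ℚ} {H K : Subgroup G}

/-- The sums of `φ` over all two-sided translates `x H a` of the subgroup `H` vanish. For the
centred indicator function of a subset `Y` of `G`, this says that `Y` is transitive on `G ⧸ H`. -/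
def CosetBalanced (φ : G → ℚ) (H : Subgroup G) : Prop :=
  ∀ x a : G, ∑ᶠ h : H, φ (x * h * a) = 0

theorem CosetBalanced.mono [Finite G] (h : CosetBalanced φ H) (hHK : H ≤ K) :
    CosetBalanced φ K := by
  have := Fintype.ofFinite H
  have := Fintype.ofFinite K
  intro x a
  rw [finsum_eq_sum_of_fintype]
  have shift_by_mem (u : H) : ∑ k : K, φ (x * k * a) = ∑ k : K, φ (x * u * (k * a)) := by
    rw [← Equiv.sum_comp (Equiv.mulLeft (⟨u, hHK u.2⟩ : K))]
    simp [mul_assoc]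
  have card_mul_sum : (Fintype.card H : ℚ) * ∑ k : K, φ (x * k * a) = 0 := by
    calc (Fintype.card H : ℚ) * ∑ k : K, φ (x * k * a)
        = ∑ u : H, ∑ k : K, φ (x * u * (k * a)) := by simp [← shift_by_mem]
      _ = ∑ k : K, ∑ᶠ u : H, φ (x * u * (k * a)) := by
        simp only [finsum_eq_sum_of_fintype]
        exact Finset.sum_comm
      _ = 0 := Finset.sum_eq_zero fun k _ => h x (k * a)
  exact (mul_eq_zero.1 card_mul_sum).resolve_left (Nat.cast_ne_zero.2 Fintype.card_ne_zero)

theorem sum_mul_translate_mul_translates [Fintype G] [Fintype H] (φ : G → ℚ) (u : H) :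
    ∑ x : G, ∑ a : G, ∑ h : H, φ (x * u * a) * φ (x * h * a) =
      ∑ x : G, ∑ g : G, φ x * φ (x * g) * Nat.card {a : G // a⁻¹ * g * a ∈ H} := by
  classical
  calc ∑ x : G, ∑ a : G, ∑ h : H, φ (x * u * a) * φ (x * h * a)
      = ∑ a : G, ∑ x : G, ∑ h : H, φ x * φ (x * (a⁻¹ * h * a)) := by
        rw [Finset.sum_comm]
        refine Finset.sum_congr rfl fun a _ => ?_
        rw [← Equiv.sum_comp (Equiv.mulRight (a⁻¹ * (u : G)⁻¹))]
        refine Finset.sum_congr rfl fun x _ => ?_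
        rw [← Equiv.sum_comp (Equiv.mulLeft u)]
        simp [mul_assoc]
    _ = ∑ x : G, ∑ a : G, ∑ g : G, if a * g * a⁻¹ ∈ H then φ x * φ (x * g) else 0 := by
        rw [Finset.sum_comm]
        refine Finset.sum_congr rfl fun x _ => Finset.sum_congr rfl fun a _ => ?_
        rw [← Finset.sum_subtype (Finset.univ.filter (· ∈ H)) (by simp)
          (fun h => φ x * φ (x * (a⁻¹ * h * a))), Finset.sum_filter,
          ← Equiv.sum_comp (MulAut.conj a).toEquiv]
        simp [mul_assoc]
    _ = ∑ x : G, ∑ g : G, φ x * φ (x * g) * Nat.card {a : G // a⁻¹ * g * a ∈ H} := by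
        refine Finset.sum_congr rfl fun x _ => ?_
        rw [Finset.sum_comm]
        refine Finset.sum_congr rfl fun g _ => ?_
        rw [← Equiv.sum_comp (Equiv.inv G)]
        simp [← Finset.sum_filter, Fintype.card_subtype, mul_comm]

theorem sum_sq_translates [Fintype G] (φ : G → ℚ) (H : Subgroup G) :
    ∑ x : G, ∑ a : G, (∑ᶠ h : H, φ (x * h * a)) ^ 2 =
      Nat.card H * ∑ x : G, ∑ g : G, φ x * φ (x * g) * Nat.card {a : G // a⁻¹ * g * a ∈ H} := by
  have := Fintype.ofFinite H
  calc ∑ x : G, ∑ a : G, (∑ᶠ h : H, φ (x * h * a)) ^ 2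
      = ∑ u : H, ∑ x : G, ∑ a : G, ∑ h : H, φ (x * u * a) * φ (x * h * a) := by
        simp_rw [finsum_eq_sum_of_fintype, sq, Finset.sum_mul, Finset.mul_sum]
        exact (Finset.sum_congr rfl fun x _ => Finset.sum_comm).trans Finset.sum_comm
    _ = _ := by simp [sum_mul_translate_mul_translates]

/-- The inner count is `|H|` times the permutation character of `G ⧸ H` at `g`. -/
theorem cosetBalanced_iff_sum_conj_count [Fintype G] : CosetBalanced φ H ↔
    ∑ x : G, ∑ g : G, φ x * φ (x * g) * Nat.card {a : G // a⁻¹ * g * a ∈ H} = 0 := by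
  have card_ne_zero : (Nat.card H : ℚ) ≠ 0 := Nat.cast_ne_zero.2 Nat.card_pos.ne'
  rw [← mul_eq_zero_iff_left card_ne_zero, ← sum_sq_translates,
    Fintype.sum_eq_zero_iff_of_nonneg fun x => Finset.sum_nonneg fun a _ => sq_nonneg _]
  simp only [CosetBalanced, funext_iff, Pi.zero_apply,
    Fintype.sum_eq_zero_iff_of_nonneg fun _ => sq_nonneg _, sq_eq_zero_iff]

theorem CosetBalanced.of_conj_count [Finite G] (h : CosetBalanced φ H)
    (hc : ∀ g : G, Nat.card {a : G // a⁻¹ * g * a ∈ H} = Nat.card {a : G // a⁻¹ * g * a ∈ K}) :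
    CosetBalanced φ K := by
  have := Fintype.ofFinite G
  rw [cosetBalanced_iff_sum_conj_count] at h ⊢
  simpa only [hc] using h

theorem CosetBalanced.of_conj [Finite G] (h : CosetBalanced φ H) (c : G)
    (hK : ∀ g, c * g * c⁻¹ ∈ H ↔ g ∈ K) : CosetBalanced φ K :=
  h.of_conj_count fun g => Nat.card_congr <| (Equiv.mulRight c).subtypeEquiv fun a => by
    simp [← hK, mul_assoc]

theorem CosetBalanced.of_antiautomorphism [Finite G] (h : CosetBalanced φ H) (T : G ≃* Gᵐᵒᵖ)
    (hT : ∀ g, IsConj g (T g).unop) (hK : ∀ g, (T g).unop ∈ H ↔ g ∈ K) : CosetBalanced φ K := by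
  refine h.of_conj_count fun g => ?_
  obtain ⟨s, hs⟩ := isConj_iff.1 (hT g)
  let e : G ≃ G := T.toEquiv.trans <| MulOpposite.opEquiv.symm.trans <|
    (Equiv.mulRight s).trans (Equiv.inv G)
  refine (Nat.card_congr <| e.subtypeEquiv fun a => ?_).symm
  simp [e, ← hK, ← hs, mul_assoc]

theorem finsum_finsum_fiber {A B : Type*} [Finite A] [Finite B] (f : A → B) (s : Set B)
    (ψ : A → ℚ) : ∑ᶠ b : s, ∑ᶠ a : {a | f a = b}, ψ a = ∑ᶠ a : f ⁻¹' s, ψ a := by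
  rw [finsum_set_coe_eq_finsum_mem (f := fun b => ∑ᶠ a : {a | f a = b}, ψ a)]
  simp only [finsum_set_coe_eq_finsum_mem]
  rw [← finsum_mem_biUnion ?_ s.toFinite fun b _ => Set.toFinite _]
  · refine congrArg (fun t : Set A => ∑ᶠ a ∈ t, ψ a) (Set.ext fun a => ?_)
    simp
  · exact fun b _ b' _ hne => Set.disjoint_left.2 fun a hb hb' => hne (hb.symm.trans hb')

theorem cosetBalanced_map_comap_iff [Finite G] {M : Type*} [Group M] {P : Subgroup G}
    {p : P →* M} (hp : Function.Surjective p) {L : Subgroup M} :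
    CosetBalanced φ ((L.comap p).map P.subtype) ↔
      ∀ x a : G, CosetBalanced (fun m => ∑ᶠ g : {g : P // p g = m}, φ (x * g * a)) L := by
  have := Finite.of_surjective p hp
  have sum_eq (x a : G) (u v : P) :
      ∑ᶠ h : (L.comap p).map P.subtype, φ (x * u * h * (v * a)) =
        ∑ᶠ m : L, ∑ᶠ g : {g : P // p g = p u * m * p v}, φ (x * g * a) := by
    rw [← finsum_eq_of_bijective _ (Subgroup.equivMapOfInjective (L.comap p) P.subtype
      P.subtype_injective).bijective fun g => rfl]
    refine (finsum_finsum_fiber p L fun g : P => φ (x * u * g * (v * a))).symm.trans ?_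
    refine finsum_congr fun m => ?_
    refine finsum_eq_of_bijective (fun g => ⟨u * g * v, by simp [show p g = m from g.2]⟩) ?_
      fun g => by simp [mul_assoc]
    exact (((Equiv.mulLeft u).trans (Equiv.mulRight v)).subtypeEquiv
      fun g => by simp).bijective
  refine ⟨fun h x a m₁ m₂ => ?_, fun h x a => ?_⟩
  · obtain ⟨u, rfl⟩ := hp m₁
    obtain ⟨v, rfl⟩ := hp m₂
    rw [← sum_eq]
    exact h _ _
  · simpa using (sum_eq x a 1 1).trans (h x a (p 1) (p 1))

theorem finsum_translate (x a : G) :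
    ∑ᶠ h : H, φ (x * h * a) = ∑ᶠ g : {g | x⁻¹ * g * a⁻¹ ∈ H}, φ g := by
  refine finsum_eq_of_bijective _ (((Equiv.mulLeft x).trans (Equiv.mulRight a)).subtypeEquiv
    fun g => ?_).bijective fun h => rfl
  simp [mul_assoc]

/-- The relation `r g x y`, meaning that `g` carries `x` to `y`, of a transitive action of `G` on
objects which the elements of `X` represent, possibly in several ways. It covers both genuine
actions and flags with bases of quotients given by representatives. -/
structure IsTransitiveTransport {X : Type*} (r : G → X → X → Prop) : Prop where
  mul : ∀ {g h x y z}, r g x y → r h y z → r (h * g) x z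
  inv : ∀ {g x y}, r g x y → r g⁻¹ y x
  exists_image : ∀ g x, ∃ y, r g x y
  exists_transporter : ∀ x y, ∃ g, r g x y

section Transport

variable {X : Type*} {r : G → X → X → Prop} {x₀ : X}

theorem IsTransitiveTransport.forall_translate_iff (hr : IsTransitiveTransport r)
    (hH : ∀ g, g ∈ H ↔ r g x₀ x₀) (P : Set G → Prop) :
    (∀ x a : G, P {g | x⁻¹ * g * a⁻¹ ∈ H}) ↔ ∀ x y, P {g | r g x y} := by
  have transporter_eq {u v : G} {x y : X} (hu : r u x₀ x) (hv : r v x₀ y) :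
      {g | r g x y} = {g | v⁻¹ * g * u⁻¹⁻¹ ∈ H} := by
    ext g
    simp only [Set.mem_ofPred_eq, hH, inv_inv]
    refine ⟨fun hg => mul_assoc v⁻¹ g u ▸ hr.mul (hr.mul hu hg) (hr.inv hv), fun hg => ?_⟩
    simpa [mul_assoc] using hr.mul (hr.inv hu) (hr.mul hg hv)
  refine ⟨fun h x y => ?_, fun h x a => ?_⟩
  · obtain ⟨u, hu⟩ := hr.exists_transporter x₀ x
    obtain ⟨v, hv⟩ := hr.exists_transporter x₀ y
    exact transporter_eq hu hv ▸ h v u⁻¹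
  · obtain ⟨y, hy⟩ := hr.exists_image a⁻¹ x₀
    obtain ⟨z, hz⟩ := hr.exists_image x x₀
    rw [← inv_inv a⁻¹, ← transporter_eq hy hz]
    simpa using h y z

theorem IsTransitiveTransport.cosetBalanced_iff (hr : IsTransitiveTransport r)
    (hH : ∀ g, g ∈ H ↔ r g x₀ x₀) :
    CosetBalanced φ H ↔ ∀ x y, ∑ᶠ g : {g | r g x y}, φ g = 0 := by
  rw [← hr.forall_translate_iff hH fun S => ∑ᶠ g : S, φ g = 0]
  simp only [CosetBalanced, finsum_translate]

end Transport

section Stabilizer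

variable {X Z : Type*} [MulAction G X] [MulAction.IsPretransitive G X] [MulAction G Z]
  [MulAction.IsPretransitive G Z]

theorem cosetBalanced_stabilizer_iff (x₀ : X) :
    CosetBalanced φ (MulAction.stabilizer G x₀) ↔
      ∀ x y : X, ∑ᶠ g : {g : G | g • x = y}, φ g = 0 :=
  IsTransitiveTransport.cosetBalanced_iff (r := fun g x y => g • x = y)
    { mul := by rintro g h x _ _ rfl rfl; exact mul_smul h g x
      inv := by rintro g x _ rfl; exact inv_smul_smul g x
      exists_image := fun g x => ⟨g • x, rfl⟩
      exists_transporter := MulAction.exists_smul_eq G }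
    fun _ => MulAction.mem_stabilizer_iff

/-- The sums over transporters are intertwined by the incidence matrix of `r`. -/
theorem CosetBalanced.stabilizer_of_injective_incidence [Finite G] [Finite X] [Finite Z]
    {r : X → Z → Prop} (hr : ∀ (g : G) x z, r (g • x) (g • z) ↔ r x z)
    (hinj : ∀ f : X → ℚ, (∀ z, ∑ᶠ x : {x | r x z}, f x = 0) → f = 0) {x₀ : X} {z₀ : Z}
    (h : CosetBalanced φ (MulAction.stabilizer G z₀)) :
    CosetBalanced φ (MulAction.stabilizer G x₀) := by
  rw [cosetBalanced_stabilizer_iff] at h ⊢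
  intro x₁
  refine congrFun (hinj _ fun z => ?_)
  have incident_iff (g : G) : r (g • x₁) z ↔ r x₁ (g⁻¹ • z) := by
    rw [← hr g x₁, smul_inv_smul]
  calc ∑ᶠ x : {x | r x z}, ∑ᶠ g : {g : G | g • x₁ = x}, φ g
      = ∑ᶠ g : {g : G | r (g • x₁) z}, φ g := finsum_finsum_fiber (· • x₁) {x | r x z} φ
    _ = ∑ᶠ g : {g : G | r x₁ (g⁻¹ • z)}, φ g :=
      congrArg (fun S : Set G => ∑ᶠ g : S, φ g) (Set.ext incident_iff)
    _ = ∑ᶠ z' : {z' | r x₁ z'}, ∑ᶠ g : {g : G | g • (z' : Z) = z}, φ g := by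
      refine (finsum_finsum_fiber (fun g : G => g⁻¹ • z) {z' | r x₁ z'} φ).symm.trans ?_
      refine finsum_congr fun z' => ?_
      refine congrArg (fun S : Set G => ∑ᶠ g : S, φ g) (Set.ext fun g => ?_)
      exact inv_smul_eq_iff.trans eq_comm
    _ = 0 := by simp [h]

end Stabilizer

section CenteredIndicator

theorem sum_finsum_translate [Fintype G] (a : G) :
    ∑ x : G, ∑ᶠ h : H, φ (x * h * a) = Nat.card H * ∑ g : G, φ g := by
  have := Fintype.ofFinite H
  simp only [finsum_eq_sum_of_fintype]
  rw [Finset.sum_comm]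
  have sum_shift (h : H) : ∑ x : G, φ (x * h * a) = ∑ x : G, φ x := by
    simpa [mul_assoc] using Equiv.sum_comp (Equiv.mulRight ((h : G) * a)) φ
  simp [sum_shift]

theorem cosetBalanced_iff_exists_eq [Fintype G] (hφ : ∑ g, φ g = 0) :
    CosetBalanced φ H ↔ ∃ s : ℚ, ∀ x a : G, ∑ᶠ h : H, φ (x * h * a) = s := by
  refine ⟨fun h => ⟨0, h⟩, ?_⟩
  rintro ⟨s, hs⟩ x a
  have card_mul : (Nat.card G : ℚ) * s = 0 := by
    simpa [hs, hφ] using sum_finsum_translate (φ := φ) (H := H) a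
  rw [hs]
  exact (mul_eq_zero.1 card_mul).resolve_left (Nat.cast_ne_zero.2 Nat.card_pos.ne')

open scoped Classical in
/-- The deviation of the indicator function of `Y` from its mean value. -/
noncomputable def centeredIndicator {A : Type*} (Y : Set A) (a : A) : ℚ :=
  (if a ∈ Y then 1 else 0) - Nat.card Y / Nat.card A

theorem finsum_centeredIndicator {A : Type*} [Finite A] (Y S : Set A) :
    ∑ᶠ a : S, centeredIndicator Y a =
      Nat.card {a // a ∈ Y ∧ a ∈ S} - Nat.card S * (Nat.card Y / Nat.card A) := by
  classical
  have := Fintype.ofFinite A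
  have card_inter : Nat.card {a // a ∈ Y ∧ a ∈ S} = Nat.card {a : S // (a : A) ∈ Y} :=
    Nat.card_congr <| (Equiv.subtypeEquivRight fun _ => and_comm).trans
      (Equiv.subtypeSubtypeEquivSubtypeInter (· ∈ S) (· ∈ Y)).symm
  rw [finsum_eq_sum_of_fintype, card_inter, Nat.card_eq_fintype_card, Fintype.card_subtype]
  simp [centeredIndicator]

theorem sum_centeredIndicator {A : Type*} [Fintype A] [Nonempty A] (Y : Set A) :
    ∑ a, centeredIndicator Y a = 0 := by
  have card_ne_zero : (Nat.card A : ℚ) ≠ 0 := Nat.cast_ne_zero.2 Nat.card_pos.ne'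
  have sum_univ := finsum_centeredIndicator Y Set.univ
  rw [finsum_set_coe_eq_finsum_mem, finsum_mem_univ, finsum_eq_sum_of_fintype] at sum_univ
  rw [sum_univ, Nat.card_univ, mul_div_cancel₀ _ card_ne_zero, sub_eq_zero, Nat.cast_inj]
  exact Nat.card_congr (Equiv.subtypeEquivRight fun a => by simp)

theorem cosetBalanced_centeredIndicator_iff [Finite G] (Y : Set G) :
    CosetBalanced (centeredIndicator Y) H ↔
      ∃ r : ℕ, ∀ x a : G, Nat.card {g // g ∈ Y ∧ g ∈ {g | x⁻¹ * g * a⁻¹ ∈ H}} = r := by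
  have := Fintype.ofFinite G
  rw [cosetBalanced_iff_exists_eq (sum_centeredIndicator Y)]
  have card_translate (x a : G) : Nat.card {g | x⁻¹ * g * a⁻¹ ∈ H} = Nat.card H := by
    refine Nat.card_congr (((Equiv.mulLeft x⁻¹).trans (Equiv.mulRight a⁻¹)).subtypeEquiv
      fun g => ?_)
    rfl
  simp only [finsum_translate, finsum_centeredIndicator, card_translate]
  constructor
  · rintro ⟨s, hs⟩
    exact ⟨_, fun x a => Nat.cast_injective (sub_left_injective ((hs x a).trans (hs 1 1).symm))⟩
  · rintro ⟨r, hr⟩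
    exact ⟨_, fun x a => by rw [hr]⟩

theorem IsTransitiveTransport.cosetBalanced_centeredIndicator_iff [Finite G] {X : Type*}
    {r : G → X → X → Prop} {x₀ : X} (hr : IsTransitiveTransport r)
    (hH : ∀ g, g ∈ H ↔ r g x₀ x₀) (Y : Set G) :
    CosetBalanced (centeredIndicator Y) H ↔
      ∃ s : ℕ, ∀ x y, Nat.card {g // g ∈ Y ∧ r g x y} = s := by
  rw [_root_.cosetBalanced_centeredIndicator_iff]
  exact exists_congr fun s =>
    hr.forall_translate_iff hH fun S => Nat.card {g // g ∈ Y ∧ g ∈ S} = s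

end CenteredIndicator

end CosetBalanced

section TransposeSimilar

open Polynomial

/-- A nondegenerate `F`-bilinear form on an `F[X]`-module for which multiplication by `X` is
self-adjoint. On the `F[X]`-module of a matrix, such a form exhibits a similarity between the
matrix and its transpose. -/
def HasSelfAdjointForm (F N : Type*) [Field F] [AddCommGroup N] [Module F N] [Module F[X] N] :
    Prop :=
  ∃ B : N →ₗ[F] N →ₗ[F] F,
    (∀ x y, B ((X : F[X]) • x) y = B x ((X : F[X]) • y)) ∧ B.SeparatingLeft

section Construction

variable {F : Type*} [Field F]

theorem HasSelfAdjointForm.of_equiv {N N' : Type*} [AddCommGroup N] [Module F N] [Module F[X] N]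
    [IsScalarTower F F[X] N] [AddCommGroup N'] [Module F N'] [Module F[X] N']
    [IsScalarTower F F[X] N'] (e : N ≃ₗ[F[X]] N') (h : HasSelfAdjointForm F N') :
    HasSelfAdjointForm F N := by
  obtain ⟨B, hB, hn⟩ := h
  let e' : N ≃ₗ[F] N' := e.restrictScalars F
  refine ⟨B.compl₁₂ e'.toLinearMap e'.toLinearMap, fun x y => ?_, fun x hx => ?_⟩
  · simpa [e'] using hB (e x) (e y)
  · refine e.map_eq_zero_iff.1 (hn _ fun y => ?_)
    simpa [e'] using hx (e.symm y)

theorem HasSelfAdjointForm.pi {ι : Type*} [Finite ι] {N : ι → Type*}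
    [∀ i, AddCommGroup (N i)] [∀ i, Module F (N i)] [∀ i, Module F[X] (N i)]
    (h : ∀ i, HasSelfAdjointForm F (N i)) : HasSelfAdjointForm F (∀ i, N i) := by
  classical
  have := Fintype.ofFinite ι
  choose B hB hn using h
  refine ⟨∑ i, (B i).compl₁₂ (LinearMap.proj i) (LinearMap.proj i),
    fun x y => by simp [hB], fun x hx => funext fun i => hn i _ fun y => ?_⟩
  have orthogonal_single := hx (Pi.single i y)
  simp only [LinearMap.coe_sum, Finset.sum_apply, LinearMap.compl₁₂_apply,
    LinearMap.proj_apply] at orthogonal_single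
  rw [Fintype.sum_eq_single i fun j hj => by simp [Pi.single_eq_of_ne hj]] at orthogonal_single
  simpa using orthogonal_single

/-- The class of `p ^ (e - 1)` spans the socle of `R ⧸ (p ^ e)`. -/
theorem exists_mul_eq_mk_pow_pred {R : Type*} [CommRing R] [IsDomain R] [IsPrincipalIdealRing R]
    {p : R} (hp : Prime p) {e : ℕ} {x : R ⧸ Ideal.span {p ^ e}} (hx : x ≠ 0) :
    ∃ y, x * y = Ideal.Quotient.mk _ (p ^ (e - 1)) := by
  obtain ⟨h, rfl⟩ := Ideal.Quotient.mk_surjective x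
  rw [Ne, Ideal.Quotient.eq_zero_iff_mem, Ideal.mem_span_singleton] at hx
  obtain ⟨d, hd⟩ := IsPrincipalIdealRing.principal (Ideal.span {h, p ^ e})
  rw [Ideal.submodule_span_eq] at hd
  have hdh : d ∣ h := Ideal.mem_span_singleton.1 (hd ▸ Ideal.subset_span (by simp))
  have hdp : d ∣ p ^ e := Ideal.mem_span_singleton.1 (hd ▸ Ideal.subset_span (by simp))
  obtain ⟨j, hj, hassoc⟩ := (dvd_prime_pow hp e).1 hdp
  have hje : j ≠ e := by
    rintro rfl
    exact hx (hassoc.symm.dvd.trans hdh)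
  have hpow : p ^ (e - 1) ∈ Ideal.span {h, p ^ e} := by
    rw [hd, Ideal.mem_span_singleton]
    exact hassoc.dvd.trans (pow_dvd_pow _ (by lia))
  obtain ⟨a, b, hab⟩ := Ideal.mem_span_pair.1 hpow
  refine ⟨Ideal.Quotient.mk _ a, ?_⟩
  rw [← map_mul, Ideal.Quotient.eq, Ideal.mem_span_singleton, ← hab]
  exact ⟨-b, by ring⟩

/-- The form is `(x, y) ↦ l (x * y)` for a functional `l` not vanishing on the socle. -/
theorem hasSelfAdjointForm_quotient {p : F[X]} (hp : Prime p) (e : ℕ) :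
    HasSelfAdjointForm F (F[X] ⧸ Ideal.span {p ^ e}) := by
  rcases e.eq_zero_or_pos with rfl | he
  · have : Subsingleton (F[X] ⧸ Ideal.span {p ^ 0}) := by
      rw [Ideal.Quotient.subsingleton_iff, pow_zero, Ideal.span_singleton_one]
    exact ⟨0, by simp, fun x _ => Subsingleton.elim _ _⟩
  have socle_ne_zero : Ideal.Quotient.mk (Ideal.span {p ^ e}) (p ^ (e - 1)) ≠ 0 := by
    rw [Ne, Ideal.Quotient.eq_zero_iff_mem, Ideal.mem_span_singleton,
      pow_dvd_pow_iff hp.ne_zero hp.not_isUnit]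
    lia
  obtain ⟨l, hl⟩ : ∃ l : Dual F (F[X] ⧸ Ideal.span {p ^ e}),
      l (Ideal.Quotient.mk _ (p ^ (e - 1))) ≠ 0 := by
    by_contra! hcon
    exact socle_ne_zero ((forall_dual_apply_eq_zero_iff F _).1 hcon)
  refine ⟨(LinearMap.mul F _).compr₂ l, fun x y => ?_, fun x hx => ?_⟩
  · simp only [LinearMap.compr₂_apply, LinearMap.mul_apply', smul_mul_assoc, mul_smul_comm]
  · by_contra hne
    obtain ⟨y, hy⟩ := exists_mul_eq_mk_pow_pred hp hne
    exact hl (hy ▸ hx y)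

end Construction

universe u v

theorem hasSelfAdjointForm_of_isTorsion {F : Type u} [Field F] {N : Type max u v}
    [AddCommGroup N] [Module F N] [Module F[X] N] [IsScalarTower F F[X] N] [Module.Finite F[X] N]
    (h : Module.IsTorsion F[X] N) : HasSelfAdjointForm F N := by
  obtain ⟨ι, _, p, hp, e, ⟨f⟩⟩ := Module.equiv_directSum_of_isTorsion h
  classical
  exact .of_equiv (f.trans (DirectSum.linearEquivFunOnFintype F[X] ι _))
    (.pi fun i => hasSelfAdjointForm_quotient (hp i).prime (e i))

theorem exists_transpose_mul_eq {F : Type u} [Field F] {ι : Type v} [Fintype ι]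
    [DecidableEq ι] (g : Matrix ι ι F) :
    ∃ s : GL ι F, g.transpose * (s : Matrix ι ι F) = s * g := by
  let a := Matrix.toLin' g
  let o := AEval'.of a
  have : Module.Finite F (AEval' a) := Module.Finite.equiv o
  have : Module.Finite F[X] (AEval' a) := Module.Finite.of_restrictScalars_finite F F[X] _
  obtain ⟨B, hB, hn⟩ : HasSelfAdjointForm F (AEval' a) :=
    hasSelfAdjointForm_of_isTorsion (AEval.isTorsion_of_finiteDimensional F (ι → F) a)
  let C : (ι → F) →ₗ[F] (ι → F) →ₗ[F] F := B.compl₁₂ o.toLinearMap o.toLinearMap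
  have adjoint : LinearMap.IsAdjointPair C C a a := fun x y => by
    simpa [C, o, AEval'.X_smul_of] using hB (o x) (o y)
  have separating : C.SeparatingLeft := fun x hx => by
    refine o.map_eq_zero_iff.1 (hn _ fun y => ?_)
    simpa [C] using hx (o.symm y)
  let S := LinearMap.toMatrix₂' F C
  have hS : IsUnit S := by
    rw [Matrix.isUnit_iff_isUnit_det, isUnit_iff_ne_zero,
      ← LinearMap.separatingLeft_toLinearMap₂'_iff_det_ne_zero, Matrix.toLinearMap₂'_toMatrix']
    exact separating
  refine ⟨hS.unit, ?_⟩
  rw [IsUnit.unit_spec]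
  refine (isAdjointPair_toLinearMap₂' S S g g).1 ?_
  rwa [Matrix.toLinearMap₂'_toMatrix']

/-- The transpose as an isomorphism of the general linear group with its opposite group. -/
def transposeGL (F ι : Type*) [CommRing F] [Fintype ι] [DecidableEq ι] :
    GL ι F ≃* (GL ι F)ᵐᵒᵖ :=
  (Units.mapEquiv (Matrix.transposeRingEquiv ι F).toMulEquiv).trans Units.opEquiv

@[simp]
theorem coe_unop_transposeGL {F ι : Type*} [CommRing F] [Fintype ι] [DecidableEq ι] (g : GL ι F) :
    ((transposeGL F ι g).unop : Matrix ι ι F) = (g : Matrix ι ι F).transpose :=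
  rfl

theorem isConj_transposeGL {F : Type u} [Field F] {ι : Type v} [Fintype ι] [DecidableEq ι]
    (g : GL ι F) : IsConj g (transposeGL F ι g).unop := by
  obtain ⟨s, hs⟩ := exists_transpose_mul_eq (g : Matrix ι ι F)
  exact isConj_iff.2 ⟨s, by rw [mul_inv_eq_iff_eq_mul]; exact Units.ext hs.symm⟩

end TransposeSimilar

section Incidence

theorem sum_sq_incidence {α β : Type*} [Fintype α] [Fintype β] (r : α → β → Prop) (f : α → ℚ) :
    ∑ b, (∑ᶠ a : {a | r a b}, f a) ^ 2 =
      ∑ a, ∑ a', f a * f a' * Nat.card {b // r a b ∧ r a' b} := by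
  classical
  have finsum_eq_sum_ite (b : β) : ∑ᶠ a : {a | r a b}, f a = ∑ a, if r a b then f a else 0 := by
    rw [finsum_set_coe_eq_finsum_mem, finsum_mem_eq_finite_toFinset_sum _ (Set.toFinite _),
      ← Finset.sum_filter]
    exact Finset.sum_congr (by ext; simp) fun _ _ => rfl
  calc ∑ b, (∑ᶠ a : {a | r a b}, f a) ^ 2
      = ∑ a, ∑ a', ∑ b, (if r a b then f a else 0) * if r a' b then f a' else 0 := by
        simp_rw [finsum_eq_sum_ite, sq, Finset.sum_mul_sum]
        rw [Finset.sum_comm]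
        exact Finset.sum_congr rfl fun a _ => Finset.sum_comm
    _ = _ := by
        refine Finset.sum_congr rfl fun a _ => Finset.sum_congr rfl fun a' _ => ?_
        simp only [ite_zero_mul_ite_zero]
        rw [← Finset.sum_filter, Finset.sum_const, nsmul_eq_mul, mul_comm,
          Nat.card_eq_fintype_card, Fintype.card_subtype]

/-- If distinct points have as many common neighbours for `r` as for `s`, the Gram matrices of the
two incidence matrices differ by a diagonal matrix, here a positive one. -/
theorem eq_zero_of_sum_incidence_eq_zero {α β γ : Type*} [Finite α] [Finite β] [Finite γ]
    {r : α → β → Prop} {s : α → γ → Prop}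
    (hne : ∀ a a', a ≠ a' →
      Nat.card {b // r a b ∧ r a' b} = Nat.card {c // s a c ∧ s a' c})
    (hlt : ∀ a, Nat.card {c // s a c} < Nat.card {b // r a b})
    {f : α → ℚ} (hf : ∀ b, ∑ᶠ a : {a | r a b}, f a = 0) : f = 0 := by
  have := Fintype.ofFinite α
  have := Fintype.ofFinite β
  have := Fintype.ofFinite γ
  let δ (a : α) : ℚ := Nat.card {b // r a b} - Nat.card {c // s a c}
  have δ_pos (a : α) : 0 < δ a := sub_pos.2 (Nat.cast_lt.2 (hlt a))
  have gram_sub : ∑ a, f a ^ 2 * δ a =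
      ∑ b, (∑ᶠ a : {a | r a b}, f a) ^ 2 - ∑ c, (∑ᶠ a : {a | s a c}, f a) ^ 2 := by
    simp only [sum_sq_incidence, ← Finset.sum_sub_distrib, ← mul_sub]
    refine Finset.sum_congr rfl fun a _ => ?_
    rw [Fintype.sum_eq_single a fun a' ha' => by rw [hne a a' ha'.symm, sub_self, mul_zero]]
    simp only [and_self, sq, δ]
  have sum_nonneg : ∀ a, 0 ≤ f a ^ 2 * δ a := fun a => mul_nonneg (sq_nonneg _) (δ_pos a).le
  have sum_eq_zero : ∑ a, f a ^ 2 * δ a = 0 := by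
    refine le_antisymm ?_ (Finset.sum_nonneg fun a _ => sum_nonneg a)
    simpa [gram_sub, hf] using Finset.sum_nonneg fun _ _ => sq_nonneg _
  rw [Fintype.sum_eq_zero_iff_of_nonneg sum_nonneg] at sum_eq_zero
  funext a
  simpa [(δ_pos a).ne'] using congrFun sum_eq_zero a

theorem card_common_covers_eq_card_common_coverees {L : Type*} [Lattice L] [IsModularLattice L]
    {a a' : L} (hne : a ≠ a') :
    Nat.card {b // a ⋖ b ∧ a' ⋖ b} = Nat.card {c // c ⋖ a ∧ c ⋖ a'} :=
  Nat.card_congr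
    { toFun := fun b => ⟨a ⊓ a', by
        have hsup := b.2.1.wcovBy.sup_eq b.2.2.wcovBy hne
        exact ⟨inf_covBy_of_covBy_sup_right (hsup ▸ b.2.2), inf_covBy_of_covBy_sup_left
          (hsup ▸ b.2.1)⟩⟩
      invFun := fun c => ⟨a ⊔ a', by
        have hinf := c.2.1.wcovBy.inf_eq c.2.2.wcovBy hne
        exact ⟨covBy_sup_of_inf_covBy_right (hinf ▸ c.2.2), covBy_sup_of_inf_covBy_left
          (hinf ▸ c.2.1)⟩⟩
      left_inv := fun b => Subtype.ext (b.2.1.wcovBy.sup_eq b.2.2.wcovBy hne)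
      right_inv := fun c => Subtype.ext (c.2.1.wcovBy.inf_eq c.2.2.wcovBy hne) }

variable {F V : Type*} [Field F] [AddCommGroup V] [Module F V]

theorem card_atoms_lt_card_atoms [Finite F] {W : Type*} [AddCommGroup W] [Module F W]
    (h : finrank F V < finrank F W) :
    Nat.card {H : Submodule F V // IsAtom H} < Nat.card {H : Submodule F W // IsAtom H} := by
  simp only [Submodule.isAtom_iff_finrank_eq_one]
  rw [← Nat.card_congr (Projectivization.equivSubmodule F V),
    ← Nat.card_congr (Projectivization.equivSubmodule F W),
    Projectivization.card_of_finrank F V rfl, Projectivization.card_of_finrank F W rfl]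
  refine Finset.sum_lt_sum_of_subset (i := finrank F V) (by simpa using h.le) (by simpa using h)
    (by simp) (pow_pos Nat.card_pos _) (by simp)

theorem card_covers_eq_card_atoms (A : Submodule F V) :
    Nat.card {B : Submodule F V // A ⋖ B} = Nat.card {H : Submodule F (V ⧸ A) // IsAtom H} := by
  let e : {B : Set.Ici A // IsAtom B} ≃ {B : Submodule F V // A ⋖ B} :=
    (Equiv.subtypeEquivRight fun _ => Set.Ici.isAtom_iff).trans
      (Equiv.subtypeSubtypeEquivSubtype CovBy.le)
  refine Nat.card_congr (e.symm.trans
    ((Submodule.comapMkQRelIso A).toEquiv.subtypeEquiv fun H => ?_).symm)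
  exact ((Submodule.comapMkQRelIso A).isAtom_iff H).symm

variable [FiniteDimensional F V]

theorem card_coverees_eq_card_atoms (A : Submodule F V) :
    Nat.card {C : Submodule F V // C ⋖ A} = Nat.card {H : Submodule F (Dual F A) // IsAtom H} := by
  let e : {C : Set.Iic A // IsCoatom C} ≃ {C : Submodule F V // C ⋖ A} :=
    (Equiv.subtypeEquivRight fun _ => Set.Iic.isCoatom_iff).trans
      (Equiv.subtypeSubtypeEquivSubtype (p := (· ∈ Set.Iic A)) (q := (· ⋖ A)) CovBy.le)
  let d : Set.Iic A ≃o (Submodule F (Dual F A))ᵒᵈ :=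
    (Submodule.mapIic A).symm.trans Subspace.orderIsoFiniteDimensional
  refine Nat.card_congr (e.symm.trans ((d.toEquiv.trans OrderDual.ofDual).subtypeEquiv fun C => ?_))
  exact (d.isCoatom_iff C).symm.trans (isCoatom_dual_iff_isAtom (a := OrderDual.ofDual (d C)))

theorem covBy_iff_le_of_finrank_eq_add_one {A B : Submodule F V}
    (h : finrank F B = finrank F A + 1) : A ⋖ B ↔ A ≤ B := by
  refine ⟨CovBy.le, fun hle => ⟨hle.lt_of_ne (by rintro rfl; lia), fun C hAC hCB => ?_⟩⟩
  have := Submodule.finrank_lt_finrank_of_lt hAC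
  have := Submodule.finrank_lt_finrank_of_lt hCB
  lia

theorem finrank_eq_add_one_of_covBy {A B : Submodule F V} (h : A ⋖ B) :
    finrank F B = finrank F A + 1 := by
  obtain ⟨v, hvB, hvA⟩ := SetLike.exists_of_lt h.lt
  have sup_eq : A ⊔ F ∙ v = B :=
    (sup_le h.le (by simpa using hvB)).eq_of_not_lt (h.2 (by simpa using hvA))
  rw [← sup_eq, Submodule.finrank_sup_span_singleton hvA]

theorem eq_zero_of_sum_subspaces_eq_zero [Finite F] {k : ℕ} (hk : 2 * k < finrank F V)
    {f : {A : Submodule F V // finrank F A = k} → ℚ}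
    (hf : ∀ B : {B : Submodule F V // finrank F B = k + 1},
      ∑ᶠ A : {A : {A : Submodule F V // finrank F A = k} | A.1 ≤ B.1}, f A = 0) : f = 0 := by
  have : Finite V := Module.finite_of_finite F
  refine eq_zero_of_sum_incidence_eq_zero (r := fun A B => A.1 ⋖ B) (s := fun A C => C ⋖ A.1)
    (fun A A' hne => card_common_covers_eq_card_common_coverees (Subtype.coe_ne_coe.2 hne))
    (fun A => ?_) fun B => ?_
  · rw [card_covers_eq_card_atoms, card_coverees_eq_card_atoms]
    refine card_atoms_lt_card_atoms ?_
    have := A.1.finrank_quotient_add_finrank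
    have := A.2
    rw [Subspace.dual_finrank_eq]
    lia
  · by_cases hB : finrank F B = k + 1
    · rw [← hf ⟨B, hB⟩]
      refine congrArg (fun S : Set _ => ∑ᶠ A : S, f A.1) (Set.ext fun A => ?_)
      exact covBy_iff_le_of_finrank_eq_add_one (by rw [hB, A.2])
    · have : IsEmpty {A : {A : Submodule F V // finrank F A = k} | A.1 ⋖ B} :=
        ⟨fun A => hB (by rw [finrank_eq_add_one_of_covBy A.2, A.1.2])⟩
      exact finsum_of_isEmpty _

end Incidence

section BlockTriangular

variable {R F ι κ κ' : Type*} [CommRing R] [Field F] [Fintype ι] [LinearOrder κ]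
  [LinearOrder κ']

theorem toSquareBlock_mul {M N : Matrix ι ι R} {β : ι → κ} (hM : M.BlockTriangular β)
    (hN : N.BlockTriangular β) (c : κ) :
    (M * N).toSquareBlock β c = M.toSquareBlock β c * N.toSquareBlock β c := by
  ext i j
  refine (Fintype.sum_of_injective Subtype.val Subtype.val_injective _ _ (fun k hk => ?_)
    fun k => rfl).symm
  rcases lt_or_gt_of_ne fun hkc => hk ⟨⟨k, hkc⟩, rfl⟩ with hk | hk
  · exact mul_eq_zero_of_left (hM (i.2.symm ▸ hk)) _
  · exact mul_eq_zero_of_right _ (hN (j.2.symm ▸ hk))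

variable [DecidableEq ι]

/-- The invertible matrices which are block upper triangular with respect to the labelling `β` of
the rows and columns, and whose diagonal blocks at the tagged labels, those with `t c = true`, are
identity matrices. The tagged labels are the ones at which a flag carries a basis. -/
def blockTriangularSubgroup (R : Type*) [CommRing R] (β : ι → κ) (t : κ → Bool) :
    Subgroup (GL ι R) where
  carrier := {g | (g : Matrix ι ι R).BlockTriangular β ∧
    ∀ c, t c = true → (g : Matrix ι ι R).toSquareBlock β c = 1}
  one_mem' := ⟨Matrix.blockTriangular_one, fun c _ =>
    Matrix.submatrix_one _ Subtype.val_injective⟩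
  mul_mem' {g h} hg hh := ⟨hg.1.mul hh.1, fun c hc => by
    rw [Units.val_mul, toSquareBlock_mul hg.1 hh.1, hg.2 c hc, hh.2 c hc, one_mul]⟩
  inv_mem' {g} hg := by
    have inv_triangular : ((g⁻¹ : GL ι R) : Matrix ι ι R).BlockTriangular β := by
      have := g.invertible
      rw [Matrix.GeneralLinearGroup.coe_inv]
      exact Matrix.blockTriangular_inv_of_blockTriangular hg.1
    refine ⟨inv_triangular, fun c hc => ?_⟩
    calc ((g⁻¹ : GL ι R) : Matrix ι ι R).toSquareBlock β c
        = ((g⁻¹ : GL ι R) : Matrix ι ι R).toSquareBlock β c *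
            (g : Matrix ι ι R).toSquareBlock β c := by rw [hg.2 c hc, mul_one]
      _ = (1 : Matrix ι ι R).toSquareBlock β c := by
        rw [← toSquareBlock_mul inv_triangular hg.1, Units.inv_mul]
      _ = 1 := Matrix.submatrix_one _ Subtype.val_injective

theorem mem_blockTriangularSubgroup {β : ι → κ} {t : κ → Bool} {g : GL ι R} :
    g ∈ blockTriangularSubgroup R β t ↔ ∀ i j, (β j < β i → (g : Matrix ι ι R) i j = 0) ∧
      (β i = β j → t (β j) = true → (g : Matrix ι ι R) i j = (1 : Matrix ι ι R) i j) := by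
  have block_eq_one (c : κ) : (g : Matrix ι ι R).toSquareBlock β c = 1 ↔
      ∀ i j, β i = c → β j = c → (g : Matrix ι ι R) i j = (1 : Matrix ι ι R) i j := by
    rw [← Matrix.submatrix_one _ Subtype.val_injective, ← Matrix.ext_iff, Subtype.forall]
    simp only [Subtype.forall]
    exact forall_congr' fun i => forall_comm
  refine ⟨fun hg i j => ⟨fun hij => hg.1 hij, fun hij hj =>
    (block_eq_one _).1 (hg.2 _ hj) i j hij rfl⟩, fun hg => ⟨fun i j => (hg i j).1, fun c hc =>
    (block_eq_one c).2 fun i j hi hj => (hg i j).2 (hi.trans hj.symm) (hj ▸ hc)⟩⟩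

theorem blockTriangularSubgroup_congr {β : ι → κ} {β' : ι → κ'} {t : κ → Bool} {t' : κ' → Bool}
    (hβ : ∀ i j, β' i < β' j ↔ β i < β j) (ht : ∀ i, t' (β' i) = t (β i)) :
    blockTriangularSubgroup R β' t' = blockTriangularSubgroup R β t := by
  ext g
  simp only [mem_blockTriangularSubgroup, ht, hβ, le_antisymm_iff, ← not_lt]

theorem blockTriangularSubgroup_le_comp {β : ι → κ} {t : κ → Bool} {μ : κ → κ'} (hμ : Monotone μ)
    {s : κ' → Bool} (hts : ∀ c, s (μ c) = true → t c = true)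
    (hinj : ∀ c d, μ c = μ d → s (μ d) = true → c = d) :
    blockTriangularSubgroup R β t ≤ blockTriangularSubgroup R (μ ∘ β) s := by
  intro g hg
  rw [mem_blockTriangularSubgroup] at hg ⊢
  exact fun i j => ⟨fun hij => (hg i j).1 (hμ.reflect_lt hij), fun hij hj =>
    (hg i j).2 (hinj _ _ hij hj) (hts _ hj)⟩

theorem blockTriangularSubgroup_comp_le {β : ι → κ} {t : κ' → Bool} {μ : κ → κ'}
    (hμ : Monotone μ) (hinj : ∀ c d, c ≠ d → μ c = μ d → t (μ d) = true) :
    blockTriangularSubgroup R (μ ∘ β) t ≤ blockTriangularSubgroup R β (t ∘ μ) := by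
  intro g hg
  rw [mem_blockTriangularSubgroup] at hg ⊢
  refine fun i j => ⟨fun hij => ?_, fun hij => (hg i j).2 (congrArg μ hij)⟩
  rcases (hμ hij.le).lt_or_eq with h | h
  · exact (hg i j).1 h
  · rw [(hg i j).2 h.symm (hinj _ _ hij.ne' h.symm), Matrix.one_apply_ne]
    rintro rfl
    exact hij.false

/-- The diagonal block at the label `c`, as a homomorphism to the smaller general linear group. -/
def diagonalBlock (R : Type*) [CommRing R] (β : ι → κ) (t : κ → Bool) (c : κ) :
    blockTriangularSubgroup R β t →* GL {i // β i = c} R :=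
  MonoidHom.toHomUnits
    { toFun := fun g => ((g : GL ι R) : Matrix ι ι R).toSquareBlock β c
      map_one' := Matrix.submatrix_one _ Subtype.val_injective
      map_mul' := fun g h => toSquareBlock_mul g.2.1 h.2.1 c }

theorem diagonalBlock_apply {β : ι → κ} {t : κ → Bool} {c : κ} (g : blockTriangularSubgroup R β t)
    (i j : {i // β i = c}) :
    (diagonalBlock R β t c g : Matrix {i // β i = c} {i // β i = c} R) i j =
      ((g : GL ι R) : Matrix ι ι R) i j := rfl

/-- The matrix with block `m` on the rows and columns satisfying `p`, and identity elsewhere. -/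
def extendByOne (p : ι → Prop) [DecidablePred p] :
    Matrix {i // p i} {i // p i} R →* Matrix ι ι R where
  toFun m := Matrix.reindex (Equiv.sumCompl p) (Equiv.sumCompl p) (Matrix.fromBlocks m 0 0 1)
  map_one' := by simp
  map_mul' a b := by
    simp [Matrix.submatrix_mul_equiv, Matrix.fromBlocks_multiply]

theorem extendByOne_apply (p : ι → Prop) [DecidablePred p] (m : Matrix {i // p i} {i // p i} R)
    (i j : ι) : extendByOne p m i j =
      if h : p i ∧ p j then m ⟨i, h.1⟩ ⟨j, h.2⟩ else (1 : Matrix ι ι R) i j := by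
  obtain ⟨i, rfl⟩ := (Equiv.sumCompl p).surjective i
  obtain ⟨j, rfl⟩ := (Equiv.sumCompl p).surjective j
  rcases i with ⟨i, hi⟩ | ⟨i, hi⟩ <;> rcases j with ⟨j, hj⟩ | ⟨j, hj⟩
  · simp [extendByOne, hi, hj]
  · simp [extendByOne, hi, hj, Matrix.one_apply, show i ≠ j from fun hij => hj (hij ▸ hi)]
  · simp [extendByOne, hi, hj, Matrix.one_apply, show i ≠ j from fun hij => hi (hij ▸ hj)]
  · rcases eq_or_ne i j with rfl | hij <;> simp [extendByOne, Matrix.one_apply, *]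

theorem diagonalBlock_surjective (β : ι → κ) {t : κ → Bool} {c : κ} (hc : t c = false) :
    Function.Surjective (diagonalBlock R β t c) := by
  intro m
  have extend_apply (i j : ι) := extendByOne_apply (fun i => β i = c) (m : Matrix _ _ R) i j
  refine ⟨⟨Units.map (extendByOne fun i => β i = c) m,
    mem_blockTriangularSubgroup.2 fun i j => ⟨fun hij => ?_, fun _ hj => ?_⟩⟩, ?_⟩
  · rw [Units.coe_map, extend_apply, dif_neg (fun h => hij.ne (h.2.trans h.1.symm)),
      Matrix.one_apply_ne (by rintro rfl; exact hij.false)]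
  · rw [Units.coe_map, extend_apply, dif_neg]
    rintro ⟨-, rfl⟩
    exact Bool.false_ne_true (hc.symm.trans hj)
  · ext i j
    rw [diagonalBlock_apply, Units.coe_map, extend_apply, dif_pos ⟨i.2, j.2⟩]

/-- Here `μ` merges labels, and `c` is the only label that several labels are merged into. -/
theorem blockTriangularSubgroup_eq_map_comap {β γ : ι → κ} {μ : κ → κ} (hμ : Monotone μ) {c : κ}
    (hinj : ∀ x y, μ x = μ y → x = y ∨ μ x = c) (hγ : ∀ i, μ (β i) = γ i) {s t : κ → Bool}
    (hs : s c = false) (hst : ∀ x, μ x ≠ c → s (μ x) = t x) :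
    blockTriangularSubgroup R β t =
      ((blockTriangularSubgroup R (fun i : {i // γ i = c} => β i) t).comap
        (diagonalBlock R γ s c)).map (blockTriangularSubgroup R γ s).subtype := by
  obtain rfl : (fun i => μ (β i)) = γ := funext hγ
  ext g
  simp only [Subgroup.mem_map, Subgroup.mem_comap, Subgroup.subtype_apply, Subtype.exists,
    exists_and_right, exists_eq_right]
  constructor
  · intro hg
    refine ⟨blockTriangularSubgroup_le_comp hμ (fun x hx => ?_) (fun x y hxy hy => ?_) hg, ?_⟩
    · rwa [← hst _ fun hc => by simp_all]
    · exact (hinj x y hxy).resolve_right fun hc => by simp_all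
    · rw [mem_blockTriangularSubgroup] at hg ⊢
      refine fun i j => ⟨(hg i j).1, fun hij hj => ((hg i j).2 hij hj).trans ?_⟩
      simp only [Matrix.one_apply, Subtype.ext_iff]
  · rintro ⟨hg, hg'⟩
    simp only [mem_blockTriangularSubgroup, diagonalBlock_apply, Subtype.forall] at hg hg' ⊢
    refine fun i j => ⟨fun hij => ?_, fun hij hj => ?_⟩
    · rcases (hμ hij.le).lt_or_eq with hμij | hμij
      · exact (hg i j).1 hμij
      · have hc := (hinj _ _ hμij).resolve_left hij.ne
        exact (hg' i (hμij.symm.trans hc) j hc).1 hij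
    · by_cases hc : μ (β j) = c
      · refine ((hg' i (by rw [hij, hc]) j hc).2 hij hj).trans ?_
        simp only [Matrix.one_apply, Subtype.ext_iff]
      · exact (hg i j).2 (by rw [hij]) ((hst _ hc).trans hj)

theorem CosetBalanced.blockTriangularSubgroup_of_diagonalBlock [Finite F] {φ : GL ι F → ℚ}
    {μ : κ → κ} (hμ : Monotone μ) {c : κ} (hinj : ∀ x y, μ x = μ y → x = y ∨ μ x = c)
    {β β' γ : ι → κ} (hβ : ∀ i, μ (β i) = γ i) (hβ' : ∀ i, μ (β' i) = γ i) {s t t' : κ → Bool}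
    (hs : s c = false) (ht : ∀ x, μ x ≠ c → s (μ x) = t x) (ht' : ∀ x, μ x ≠ c → s (μ x) = t' x)
    (hblock : ∀ ψ : GL {i // γ i = c} F → ℚ,
      CosetBalanced ψ (blockTriangularSubgroup F (fun i => β i) t) →
      CosetBalanced ψ (blockTriangularSubgroup F (fun i => β' i) t'))
    (h : CosetBalanced φ (blockTriangularSubgroup F β t)) :
    CosetBalanced φ (blockTriangularSubgroup F β' t') := by
  have surj := diagonalBlock_surjective (R := F) γ hs
  rw [blockTriangularSubgroup_eq_map_comap hμ hinj hβ hs ht, cosetBalanced_map_comap_iff surj] at h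
  rw [blockTriangularSubgroup_eq_map_comap hμ hinj hβ' hs ht', cosetBalanced_map_comap_iff surj]
  exact fun x a => hblock _ (h x a)

theorem CosetBalanced.blockTriangularSubgroup_of_orderReversing [Finite F] {φ : GL ι F → ℚ}
    {β : ι → κ} {β' : ι → κ'} {t : κ → Bool} {t' : κ' → Bool}
    (hβ : ∀ i j, β' i < β' j ↔ β j < β i) (ht : ∀ i, t' (β' i) = t (β i))
    (h : CosetBalanced φ (blockTriangularSubgroup F β t)) :
    CosetBalanced φ (blockTriangularSubgroup F β' t') := by
  have hβ_eq (i j : ι) : β' i = β' j ↔ β j = β i := by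
    simp only [le_antisymm_iff, ← not_lt, hβ]
  refine h.of_antiautomorphism (transposeGL F ι) isConj_transposeGL fun g => ?_
  simp only [mem_blockTriangularSubgroup, coe_unop_transposeGL, Matrix.transpose_apply, hβ, hβ_eq,
    ht]
  rw [forall_comm]
  refine forall₂_congr fun i j => and_congr_right' (forall_congr' fun hij => ?_)
  rw [hij, ← Matrix.transpose_apply 1, Matrix.transpose_one]

theorem CosetBalanced.blockTriangularSubgroup_comp_perm [Finite F] {φ : GL ι F → ℚ} {β : ι → κ}
    {t : κ → Bool} (h : CosetBalanced φ (blockTriangularSubgroup F β t)) (π : Equiv.Perm ι) :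
    CosetBalanced φ (blockTriangularSubgroup F (β ∘ π) t) := by
  let u : GL ι F := Units.map Matrix.permMatrixHom (toUnits π)
  have conj_apply (g : GL ι F) (i j : ι) : ((u * g * u⁻¹ : GL ι F) : Matrix ι ι F) i j =
      (g : Matrix ι ι F) (π⁻¹ i) (π⁻¹ j) := by
    change (π⁻¹.permMatrix F * (g : Matrix ι ι F) * π⁻¹⁻¹.permMatrix F) i j = _
    rw [PEquiv.mul_toMatrix_toPEquiv, PEquiv.toMatrix_toPEquiv_mul]
    rfl
  refine h.of_conj u fun g => ?_
  simp only [mem_blockTriangularSubgroup, conj_apply, Function.comp_apply]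
  rw [← π.forall_congr_right]
  refine forall_congr' fun i => ?_
  rw [← π.forall_congr_right]
  simp [Matrix.one_apply]

theorem CosetBalanced.blockTriangularSubgroup_of_covBy [Finite F] {φ : GL ι F → ℚ} {c d : κ}
    (hcd : c ⋖ d) {β β' : ι → κ}
    (hβ : ∀ i, β i = β' i ∨ (β i = c ∨ β i = d) ∧ (β' i = c ∨ β' i = d))
    {t t' : κ → Bool} (ht : ∀ x, x ≠ c → x ≠ d → t x = t' x)
    (hblock : ∀ ψ : GL {i // (if β i = d then c else β i) = c} F → ℚ,
      CosetBalanced ψ (blockTriangularSubgroup F (fun i => β i) t) →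
      CosetBalanced ψ (blockTriangularSubgroup F (fun i => β' i) t'))
    (h : CosetBalanced φ (blockTriangularSubgroup F β t)) :
    CosetBalanced φ (blockTriangularSubgroup F β' t') := by
  have := hcd.lt.ne
  have le_of_lt (x : κ) : x < d → x ≤ c := hcd.le_of_lt
  have hmono : Monotone fun x => if x = d then c else x := fun x y hxy => by
    have hx := le_of_lt x
    have hc := hcd.le
    dsimp only
    split_ifs <;> grind
  refine h.blockTriangularSubgroup_of_diagonalBlock hmono (c := c)
    (s := fun x => if x = c then false else t x) (fun x y => ?_)
    (fun i => rfl) (fun i => ?_) (if_pos rfl) (fun x => ?_) (fun x => ?_) hblock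
  all_goals grind

theorem CosetBalanced.blockTriangularSubgroup_swap_comp [Finite F] {φ : GL ι F → ℚ} {c d : κ}
    (hcd : c ⋖ d) {β : ι → κ} {t : κ → Bool}
    (h : CosetBalanced φ (blockTriangularSubgroup F β t)) :
    CosetBalanced φ (blockTriangularSubgroup F (Equiv.swap c d ∘ β) (t ∘ Equiv.swap c d)) := by
  refine h.blockTriangularSubgroup_of_covBy hcd (fun i => ?_) (fun x hxc hxd => ?_) fun ψ hψ => ?_
  · grind
  · rw [Function.comp_apply, Equiv.swap_apply_of_ne_of_ne hxc hxd]
  · refine hψ.blockTriangularSubgroup_of_orderReversing (fun i j => ?_) fun i => ?_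
    · have := hcd.lt
      grind
    · rw [Function.comp_apply, Function.comp_apply, Equiv.swap_apply_self]

theorem CosetBalanced.blockTriangularSubgroup_perm_comp [Finite F] {m : ℕ} {φ : GL ι F → ℚ}
    (s : Equiv.Perm (Fin m)) {β : ι → Fin m} {t : Fin m → Bool}
    (h : CosetBalanced φ (blockTriangularSubgroup F β t)) :
    CosetBalanced φ (blockTriangularSubgroup F (s ∘ β) (t ∘ s.symm)) := by
  obtain _ | m := m
  · rwa [Subsingleton.elim s 1]
  have hs : s ∈ Submonoid.closure
      (Set.range fun i : Fin m => Equiv.swap i.castSucc i.succ) := by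
    rw [Equiv.Perm.mclosure_swap_castSucc_succ]; trivial
  induction hs using Submonoid.closure_induction generalizing β t with
  | one => exact h
  | mul _ _ _ _ hx hy => exact hx (hy h)
  | mem x hx =>
    obtain ⟨i, rfl⟩ := hx
    exact h.blockTriangularSubgroup_swap_comp (Fin.covBy_iff.2 (Order.covBy_add_one _))

end BlockTriangular

section Subspaces

open scoped Pointwise Matrix

theorem card_subtype_ite_eq {ι κ : Type*} [Finite ι] [DecidableEq κ] {β : ι → κ} {c d : κ}
    (hcd : c ≠ d) :
    Nat.card {i // (if β i = d then c else β i) = c} =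
      Nat.card {i // β i = c} + Nat.card {i // β i = d} := by
  classical
  rw [← Nat.card_sum]
  refine Nat.card_congr ((Equiv.subtypeEquivRight fun i => ?_).trans (subtypeOrEquiv _ _ ?_))
  · grind
  · exact Pi.disjoint_iff.2 fun i => Prop.disjoint_iff.2 (by grind)

variable {F ι κ : Type*} [Field F] [Fintype ι] [DecidableEq ι] [LinearOrder κ]

theorem finrank_smul_eq (g : GL ι F) (A : Submodule F (ι → F)) :
    finrank F (g • A : Submodule F (ι → F)) = finrank F A :=
  (Submodule.equivMapOfInjective _ (MulAction.injective g) A).finrank_eq.symm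

theorem exists_smul_eq_of_finrank_eq {A B : Submodule F (ι → F)} (h : finrank F A = finrank F B) :
    ∃ g : GL ι F, g • A = B := by
  obtain ⟨A', hA⟩ := A.exists_isCompl
  obtain ⟨B', hB⟩ := B.exists_isCompl
  have h' : finrank F A' = finrank F B' := by
    have hAA' := Submodule.finrank_add_eq_of_isCompl hA
    have hBB' := Submodule.finrank_add_eq_of_isCompl hB
    omega
  let e : (ι → F) ≃ₗ[F] (ι → F) := (Submodule.prodEquivOfIsCompl A A' hA).symm ≪≫ₗ
    (LinearEquiv.ofFinrankEq A B h).prodCongr (LinearEquiv.ofFinrankEq A' B' h') ≪≫ₗ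
    Submodule.prodEquivOfIsCompl B B' hB
  let g : GL ι F :=
    Matrix.GeneralLinearGroup.toLin.symm (LinearMap.GeneralLinearGroup.ofLinearEquiv e)
  refine ⟨g, Submodule.eq_of_le_of_finrank_eq ?_ ((finrank_smul_eq g A).trans h)⟩
  rintro _ ⟨a, ha, rfl⟩
  have hsymm : (Submodule.prodEquivOfIsCompl A A' hA).symm a = (⟨a, ha⟩, 0) :=
    Submodule.prodEquivOfIsCompl_symm_apply_left A A' hA ⟨a, ha⟩
  have hga : g • a = e a :=
    congrArg (fun u : LinearMap.GeneralLinearGroup F (ι → F) => (u : (ι → F) →ₗ[F] (ι → F)) a)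
      (Matrix.GeneralLinearGroup.toLin.apply_symm_apply _)
  change g • a ∈ B
  simp [hga, e, hsymm]

instance (k : ℕ) : MulAction (GL ι F) {A : Submodule F (ι → F) // finrank F A = k} where
  smul g A := ⟨g • A.1, (finrank_smul_eq g A.1).trans A.2⟩
  one_smul A := Subtype.ext (one_smul _ A.1)
  mul_smul g h A := Subtype.ext (mul_smul g h A.1)

instance (k : ℕ) :
    MulAction.IsPretransitive (GL ι F) {A : Submodule F (ι → F) // finrank F A = k} where
  exists_smul_eq A B := by
    obtain ⟨g, hg⟩ := exists_smul_eq_of_finrank_eq (A.2.trans B.2.symm)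
    exact ⟨g, Subtype.ext hg⟩

theorem smul_spanSubset_le_iff (g : GL ι F) (s r : Set ι) :
    g • Pi.spanSubset F s ≤ Pi.spanSubset F r ↔ ∀ i ∉ r, ∀ j ∈ s, g i j = 0 := by
  have hmul (v : ι → F) : g • v = (g : Matrix ι ι F) *ᵥ v := rfl
  constructor
  · intro h i hi j hj
    have hsingle : Pi.single j 1 ∈ Pi.spanSubset F s :=
      Pi.mem_spanSubset_iff.2 fun _ hl => Pi.single_eq_of_ne (ne_of_mem_of_not_mem hj hl).symm 1
    have := Pi.mem_spanSubset_iff.1 (h (Submodule.smul_mem_pointwise_smul _ g _ hsingle)) i hi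
    simpa [hmul] using this
  · rintro h _ ⟨v, hv, rfl⟩
    refine Pi.mem_spanSubset_iff.2 fun i hi => Finset.sum_eq_zero fun j _ => ?_
    by_cases hj : j ∈ s
    · exact mul_eq_zero_of_left (h i hi j hj) _
    · exact mul_eq_zero_of_right _ (Pi.mem_spanSubset_iff.1 hv j hj)

theorem blockTriangularSubgroup_eq_stabilizer {c d : κ} (hcd : c < d) {β : ι → κ}
    (hβ : ∀ i, β i = c ∨ β i = d) {t : κ → Bool} (hc : t c = false) (hd : t d = false) {k : ℕ}
    {A : {A : Submodule F (ι → F) // finrank F A = k}} (hA : A.1 = Pi.spanSubset F (β ⁻¹' {c})) :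
    blockTriangularSubgroup F β t = MulAction.stabilizer (GL ι F) A := by
  ext g
  have hstab : g ∈ MulAction.stabilizer (GL ι F) A ↔ g • A.1 ≤ A.1 :=
    (MulAction.mem_stabilizer_iff.trans Subtype.ext_iff).trans
      ⟨le_of_eq, fun hle => Submodule.eq_of_le_of_finrank_eq hle (finrank_smul_eq g _)⟩
  rw [hstab, hA, smul_spanSubset_le_iff, mem_blockTriangularSubgroup]
  simp only [Set.mem_preimage, Set.mem_singleton_iff]
  refine ⟨fun h i hi j hj => (h i j).1 ?_, fun h i j => ⟨fun hij => ?_, ?_⟩⟩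
  · rwa [hj, (hβ i).resolve_left hi]
  · grind
  · grind

theorem CosetBalanced.stabilizer_subspace [Finite F] {φ : GL ι F → ℚ} {k : ℕ}
    (hk : 2 * k < Fintype.card ι) {A : {A : Submodule F (ι → F) // finrank F A = k}}
    {B : {B : Submodule F (ι → F) // finrank F B = k + 1}}
    (h : CosetBalanced φ (MulAction.stabilizer (GL ι F) B)) :
    CosetBalanced φ (MulAction.stabilizer (GL ι F) A) := by
  refine h.stabilizer_of_injective_incidence (r := fun A B => A.1 ≤ B.1) (fun g A B => ?_)
    fun f hf => ?_
  · exact Set.smul_set_subset_smul_set_iff (a := g) (A := (A.1 : Set (ι → F))) (B := B.1)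
  · exact eq_zero_of_sum_subspaces_eq_zero (by simpa using hk) hf

theorem CosetBalanced.blockTriangularSubgroup_of_two_blocks [Finite F] {φ : GL ι F → ℚ} {c d : κ}
    (hcd : c < d) {β β' : ι → κ} (hβ : ∀ i, β i = c ∨ β i = d) (hβ' : ∀ i, β' i = c ∨ β' i = d)
    {t : κ → Bool} (hc : t c = false) (hd : t d = false)
    (hcard : Nat.card {i // β i = c} = Nat.card {i // β' i = c} + 1)
    (hlt : 2 * Nat.card {i // β' i = c} < Nat.card ι)
    (h : CosetBalanced φ (blockTriangularSubgroup F β t)) :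
    CosetBalanced φ (blockTriangularSubgroup F β' t) := by
  let A : {A : Submodule F (ι → F) // finrank F A = Nat.card {i // β' i = c}} :=
    ⟨Pi.spanSubset F (β' ⁻¹' {c}), Pi.dim_spanSubset⟩
  let B : {B : Submodule F (ι → F) // finrank F B = Nat.card {i // β' i = c} + 1} :=
    ⟨Pi.spanSubset F (β ⁻¹' {c}), Pi.dim_spanSubset.trans hcard⟩
  rw [blockTriangularSubgroup_eq_stabilizer hcd hβ hc hd (A := B) rfl] at h
  rw [blockTriangularSubgroup_eq_stabilizer hcd hβ' hc hd (A := A) rfl]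
  exact h.stabilizer_subspace (by simpa using hlt)

theorem CosetBalanced.blockTriangularSubgroup_of_card_eq_add_one [Finite F] {φ : GL ι F → ℚ}
    {c d : κ} (hcd : c ⋖ d) {β β' : ι → κ}
    (hβ : ∀ i, β i = β' i ∨ (β i = c ∨ β i = d) ∧ (β' i = c ∨ β' i = d))
    {t : κ → Bool} (hc : t c = false) (hd : t d = false)
    (hcard : Nat.card {i // β i = c} = Nat.card {i // β' i = c} + 1)
    (hle : Nat.card {i // β' i = c} ≤ Nat.card {i // β i = d})
    (h : CosetBalanced φ (blockTriangularSubgroup F β t)) :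
    CosetBalanced φ (blockTriangularSubgroup F β' t) := by
  refine h.blockTriangularSubgroup_of_covBy hcd hβ (fun _ _ _ => rfl) fun ψ hψ => ?_
  have hfiber {γ : ι → κ} (hγ : ∀ i, γ i = c → (if β i = d then c else β i) = c) :
      Nat.card {i : {i // (if β i = d then c else β i) = c} // γ i = c} =
        Nat.card {i // γ i = c} :=
    Nat.card_congr (Equiv.subtypeSubtypeEquivSubtype (hγ _))
  have hfiber_β := hfiber (γ := β) (by grind)
  have hfiber_β' := hfiber (γ := β') (by grind)
  have htotal := card_subtype_ite_eq (β := β) hcd.lt.ne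
  refine hψ.blockTriangularSubgroup_of_two_blocks hcd.lt ?_ ?_ hc hd ?_ ?_
  · rintro ⟨i, hi⟩
    grind
  · rintro ⟨i, hi⟩
    grind
  · omega
  · omega

end Subspaces

section BlockTypes

theorem exists_perm_of_card_fiber_eq {α γ : Type*} [Finite α] {f g : α → γ}
    (h : ∀ c, Nat.card {a // f a = c} = Nat.card {a // g a = c}) :
    ∃ e : Equiv.Perm α, ∀ a, g (e a) = f a := by
  have hequiv c : Nonempty ({a // f a = c} ≃ {a // g a = c}) := Finite.card_eq.1 (h c)
  exact ⟨Equiv.ofFiberEquiv fun c => (hequiv c).some, Equiv.ofFiberEquiv_map _⟩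

theorem exists_perm_of_map_univ_eq {α γ : Type*} [Fintype α] {f g : α → γ}
    (h : Finset.univ.val.map f = Finset.univ.val.map g) :
    ∃ e : Equiv.Perm α, ∀ a, g (e a) = f a := by
  classical
  refine exists_perm_of_card_fiber_eq fun c => ?_
  have hcount := congrArg (Multiset.count c) h
  simp only [Multiset.count_map] at hcount
  rw [Nat.card_eq_fintype_card, Nat.card_eq_fintype_card, Fintype.card_subtype,
    Fintype.card_subtype]
  simpa only [Finset.card, Finset.filter_val, eq_comm] using hcount

theorem card_fiber_update_add_ite {ι κ : Type*} [Finite ι] [DecidableEq ι] [DecidableEq κ]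
    (β : ι → κ) (i₀ : ι) (c d : κ) :
    Nat.card {i // Function.update β i₀ c i = d} + (if β i₀ = d then 1 else 0) =
      Nat.card {i // β i = d} + (if c = d then 1 else 0) := by
  have := Fintype.ofFinite ι
  have hcard (γ : ι → κ) : Nat.card {i // γ i = d} =
      (if γ i₀ = d then 1 else 0) + ∑ i ∈ Finset.univ.erase i₀, if γ i = d then 1 else 0 := by
    rw [Finset.add_sum_erase _ (fun i => if γ i = d then 1 else 0) (Finset.mem_univ i₀),
      Nat.card_eq_fintype_card, Fintype.card_subtype, Finset.card_filter]
  have hrest : (∑ i ∈ Finset.univ.erase i₀, if Function.update β i₀ c i = d then 1 else 0) =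
      ∑ i ∈ Finset.univ.erase i₀, if β i = d then 1 else 0 :=
    Finset.sum_congr rfl fun i hi => by rw [Function.update_of_ne (Finset.ne_of_mem_erase hi)]
  rw [hcard, hcard β, hrest, Function.update_self]
  ring

theorem predAbove_zero_eq_zero_iff {k : ℕ} {c : Fin (k + 2)} :
    Fin.predAbove 0 c = 0 ↔ c = 0 ∨ c = 1 := by
  cases c using Fin.cases with
  | zero => simp
  | succ c =>
    rw [Fin.predAbove_zero_succ, or_iff_right (Fin.succ_ne_zero c)]
    exact (Fin.succ_inj (b := 0)).symm

theorem predAbove_zero_eq_succ_iff {k : ℕ} {c : Fin (k + 2)} {d : Fin k} :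
    Fin.predAbove 0 c = d.succ ↔ c = d.succ.succ := by
  cases c using Fin.cases with
  | zero => simp [(Fin.succ_ne_zero _).symm]
  | succ c => simp

theorem predAbove_zero_eq_zero_of_ne {k : ℕ} {c d : Fin (k + 2)} (hcd : c ≠ d)
    (h : Fin.predAbove 0 c = Fin.predAbove 0 d) : Fin.predAbove 0 d = 0 := by
  cases c using Fin.cases <;> cases d using Fin.cases <;> simp_all

theorem card_fiber_predAbove_zero {ι : Type*} [Finite ι] {k : ℕ} (β : ι → Fin (k + 2)) :
    Nat.card {i // Fin.predAbove 0 (β i) = 0} =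
      Nat.card {i // β i = 0} + Nat.card {i // β i = 1} := by
  classical
  rw [← Nat.card_sum, ← Nat.card_congr (subtypeOrEquiv _ _ _)]
  · exact Nat.card_congr (Equiv.subtypeEquivRight fun i => predAbove_zero_eq_zero_iff)
  · exact Pi.disjoint_iff.2 fun i => Prop.disjoint_iff.2 fun h => by simp [h.1] at h

variable {F ι : Type*} [Field F] [Fintype ι] [DecidableEq ι]

/-- The multiset of the sizes of the blocks cut out by the labelling `β`, each size being paired
with the tag of its block. -/
noncomputable def blockType {m : ℕ} (β : ι → Fin m) (t : Fin m → Bool) : Multiset (ℕ × Bool) :=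
  Finset.univ.val.map fun c => (Nat.card {i // β i = c}, t c)

/-- The property that `φ` is balanced for all the block triangular subgroups whose tagged block
sizes form the multiset `M`. -/
def TypeBalanced (φ : GL ι F → ℚ) (M : Multiset (ℕ × Bool)) : Prop :=
  ∀ (m : ℕ) (β : ι → Fin m) (t : Fin m → Bool), blockType β t = M →
    CosetBalanced φ (blockTriangularSubgroup F β t)

variable {φ : GL ι F → ℚ} {M : Multiset (ℕ × Bool)} [Finite F]

theorem CosetBalanced.typeBalanced_blockType {m : ℕ} {β : ι → Fin m} {t : Fin m → Bool}
    (h : CosetBalanced φ (blockTriangularSubgroup F β t)) : TypeBalanced φ (blockType β t) := by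
  intro m' β' t' hβ'
  obtain rfl : m' = m := by simpa [blockType] using congrArg Multiset.card hβ'
  obtain ⟨s, hs⟩ := exists_perm_of_map_univ_eq hβ'.symm
  obtain ⟨π, hπ⟩ := exists_perm_of_card_fiber_eq (f := β') (g := s ∘ β) fun c => by
    have hfst := congrArg Prod.fst (hs (s.symm c))
    simp only [Equiv.apply_symm_apply] at hfst
    rw [hfst]
    exact Nat.card_congr (Equiv.subtypeEquivRight fun i => by simp [Equiv.eq_symm_apply])
  have hβ : (s ∘ β) ∘ π = β' := funext hπ
  have ht : t ∘ s.symm = t' := funext fun c => by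
    simpa using (congrArg Prod.snd (hs (s.symm c))).symm
  exact hβ ▸ ht ▸ (h.blockTriangularSubgroup_perm_comp s).blockTriangularSubgroup_comp_perm π

theorem typeBalanced_coe_iff {L : List (ℕ × Bool)} :
    TypeBalanced φ L ↔ ∀ β : ι → Fin L.length, (∀ c, Nat.card {i // β i = c} = (L.get c).1) →
      CosetBalanced φ (blockTriangularSubgroup F β fun c => (L.get c).2) := by
  have hL : Finset.univ.val.map L.get = (L : Multiset (ℕ × Bool)) := by
    rw [Fin.univ_val_map, List.ofFn_get]
  refine ⟨fun h β hβ => h _ _ _ ?_, fun h m β t hβ => ?_⟩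
  · rw [← hL]
    exact Multiset.map_congr rfl fun c _ => Prod.ext (hβ c) rfl
  · obtain rfl : m = L.length := by simpa [blockType] using congrArg Multiset.card hβ
    obtain ⟨s, hs⟩ := exists_perm_of_map_univ_eq (hβ.trans hL.symm)
    have hbal := (h (s ∘ β) fun c => ?_).blockTriangularSubgroup_perm_comp s.symm
    · have hβs : s.symm ∘ s ∘ β = β := funext fun i => s.symm_apply_apply _
      have hts : (fun c => (L.get c).2) ∘ s.symm.symm = t :=
        funext fun c => congrArg Prod.snd (hs c)
      rwa [hβs, hts] at hbal
    · have hfst := congrArg Prod.fst (hs (s.symm c))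
      rw [Equiv.apply_symm_apply] at hfst
      rw [hfst]
      exact Nat.card_congr (Equiv.subtypeEquivRight fun i => (s.eq_symm_apply).symm)

theorem TypeBalanced.of_cons_zero (h : TypeBalanced φ ((0, false) ::ₘ M)) : TypeBalanced φ M := by
  induction M using Quotient.inductionOn with | _ L
  refine typeBalanced_coe_iff.2 fun β hβ => ?_
  have hsucc := typeBalanced_coe_iff.1 h (fun i => (β i).succ) fun c => ?_
  · rwa [blockTriangularSubgroup_congr (β := β) (t := fun c => (L.get c).2)
      (fun i j => Fin.succ_lt_succ_iff) fun i => rfl] at hsucc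
  · cases c using Fin.cases with
    | zero => simp
    | succ c => simpa using hβ c

theorem TypeBalanced.untag {p : ℕ} (h : TypeBalanced φ ((p, true) ::ₘ M)) :
    TypeBalanced φ ((p, false) ::ₘ M) := by
  induction M using Quotient.inductionOn with | _ L
  refine typeBalanced_coe_iff.2 fun β hβ => ?_
  refine (typeBalanced_coe_iff.1 h β fun c => ?_).mono
    (blockTriangularSubgroup_le_comp monotone_id (fun c hc => ?_) fun c d hcd _ => hcd)
  · cases c using Fin.cases with
    | zero => exact hβ 0
    | succ c => exact hβ c.succ
  · cases c using Fin.cases with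
    | zero => rfl
    | succ c => exact hc

theorem TypeBalanced.split {a b : ℕ} (h : TypeBalanced φ ((a + b, true) ::ₘ M)) :
    TypeBalanced φ ((a, true) ::ₘ (b, true) ::ₘ M) := by
  induction M using Quotient.inductionOn with | _ L
  refine typeBalanced_coe_iff.2 fun β hβ => ?_
  have htag : (fun c => (((a, true) :: (b, true) :: L).get c).2) =
      (fun c => (((a + b, true) :: L).get c).2) ∘ Fin.predAbove 0 := by
    funext c
    cases c using Fin.cases with
    | zero => rfl
    | succ c => cases c using Fin.cases <;> rfl
  have hmerge := typeBalanced_coe_iff.1 h (Fin.predAbove 0 ∘ β) fun c => ?_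
  · rw [htag]
    refine hmerge.mono (blockTriangularSubgroup_comp_le (Fin.predAbove_right_monotone 0) ?_)
    intro c d hcd hd
    rw [predAbove_zero_eq_zero_of_ne hcd hd]
    rfl
  · cases c using Fin.cases with
    | zero => exact (card_fiber_predAbove_zero β).trans (congrArg₂ (· + ·) (hβ 0) (hβ 1))
    | succ c =>
      exact (Nat.card_congr (Equiv.subtypeEquivRight fun i => predAbove_zero_eq_succ_iff)).trans
        (hβ c.succ.succ)

theorem TypeBalanced.shift {a b : ℕ} (hba : b ≤ a)
    (h : TypeBalanced φ ((b + 1, false) ::ₘ (a, false) ::ₘ M)) :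
    TypeBalanced φ ((b, false) ::ₘ (a + 1, false) ::ₘ M) := by
  induction M using Quotient.inductionOn with | _ L
  refine typeBalanced_coe_iff.2 fun β hβ => ?_
  obtain ⟨⟨i₁, hi₁⟩⟩ : Nonempty {i // β i = 1} := (Nat.card_pos_iff.1 (hβ 1 ▸ a.succ_pos)).1
  have h01 : (0 : Fin (L.length + 2)) ⋖ 1 := Fin.covBy_iff.2 (Order.covBy_add_one 0)
  have hβ_zero : Nat.card {i // β i = 0} = b := hβ 0
  have hβ_one : Nat.card {i // β i = 1} = a + 1 := hβ 1
  have hcard_zero : Nat.card {i // Function.update β i₁ 0 i = 0} = b + 1 := by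
    simpa [hi₁, hβ_zero, -Nat.card_eq_fintype_card] using card_fiber_update_add_ite β i₁ 0 0
  have hcard_one : Nat.card {i // Function.update β i₁ 0 i = 1} = a := by
    simpa [hi₁, hβ_one, -Nat.card_eq_fintype_card] using card_fiber_update_add_ite β i₁ 0 1
  have hcard_succ (c : Fin L.length) :
      Nat.card {i // Function.update β i₁ 0 i = c.succ.succ} = (L.get c).1 := by
    simpa [hi₁, Fin.ext_iff] using (card_fiber_update_add_ite β i₁ 0 c.succ.succ).trans
      (congrArg (· + _) (hβ c.succ.succ))
  have hget : (fun c => (((b, false) :: (a + 1, false) :: L).get c).2) =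
      fun c => (((b + 1, false) :: (a, false) :: L).get c).2 := by
    funext c
    cases c using Fin.cases with
    | zero => rfl
    | succ c => cases c using Fin.cases <;> rfl
  have hbal := typeBalanced_coe_iff.1 h (Function.update β i₁ 0) fun c => ?_
  · rw [hget]
    refine hbal.blockTriangularSubgroup_of_card_eq_add_one h01 (fun i => ?_) rfl rfl ?_ ?_
    · by_cases hi : i = i₁
      · exact Or.inr (by simp [hi, hi₁])
      · exact Or.inl (by simp [hi])
    · exact hcard_zero.trans (congrArg (· + 1) hβ_zero.symm)
    · exact (hβ_zero.trans_le hba).trans_eq hcard_one.symm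
  · cases c using Fin.cases with
    | zero => exact hcard_zero
    | succ c => cases c using Fin.cases with
      | zero => exact hcard_one
      | succ c => exact hcard_succ c

end BlockTypes

section Dominance

/-- The total amount `∑ (p - t)` by which the parts `p > t` of `μ` exceed `t`. Comparing these
numbers for all `t` is comparing conjugate partitions, so it captures dominance without sorting. -/
def excess (t : ℕ) (μ : Multiset ℕ) : ℕ :=
  (μ.map (· - t)).sum

@[simp]
theorem excess_cons (t p : ℕ) (μ : Multiset ℕ) : excess t (p ::ₘ μ) = p - t + excess t μ := by
  simp [excess]

@[simp]
theorem excess_add (t : ℕ) (μ ν : Multiset ℕ) : excess t (μ + ν) = excess t μ + excess t ν := by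
  simp [excess]

@[simp]
theorem excess_zero (μ : Multiset ℕ) : excess 0 μ = μ.sum := by
  simp [excess]

theorem excess_eq_zero_of_sum_le {t : ℕ} {μ : Multiset ℕ} (h : μ.sum ≤ t) : excess t μ = 0 := by
  refine Multiset.sum_eq_zero fun x hx => ?_
  obtain ⟨p, hp, rfl⟩ := Multiset.mem_map.1 hx
  exact Nat.sub_eq_zero_of_le ((Multiset.le_sum_of_mem hp).trans h)

theorem excess_succ_add_countP (t : ℕ) (μ : Multiset ℕ) :
    excess (t + 1) μ + μ.countP (t < ·) = excess t μ := by
  induction μ using Multiset.induction with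
  | empty => simp [excess]
  | cons p μ ih =>
    rw [excess_cons, excess_cons, Multiset.countP_cons]
    split_ifs <;> omega

theorem countP_lt_eq_count_add_countP_lt (t : ℕ) (μ : Multiset ℕ) :
    μ.countP (t < ·) = μ.count (t + 1) + μ.countP (t + 1 < ·) := by
  induction μ using Multiset.induction with
  | empty => simp
  | cons p μ ih =>
    rw [Multiset.countP_cons, Multiset.countP_cons, Multiset.count_cons, ih]
    split_ifs <;> omega

theorem countP_lt_eq_card_filter_add_countP_le {c d : ℕ} (hcd : c < d) (μ : Multiset ℕ) :
    μ.countP (c < ·) = (μ.filter fun p => c < p ∧ p < d).card + μ.countP (d ≤ ·) := by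
  rw [← Multiset.countP_eq_card_filter]
  induction μ using Multiset.induction with
  | empty => simp
  | cons p μ ih =>
    rw [Multiset.countP_cons, Multiset.countP_cons, Multiset.countP_cons, ih]
    split_ifs <;> omega

theorem filter_pos_eq_of_excess_eq {μ ν : Multiset ℕ} (h : ∀ t, excess t μ = excess t ν) :
    μ.filter (0 < ·) = ν.filter (0 < ·) := by
  have hcountP : ∀ t, μ.countP (t < ·) = ν.countP (t < ·) := fun t => by
    have hμ := excess_succ_add_countP t μ
    have hν := excess_succ_add_countP t ν
    rw [h, h] at hμ
    omega
  ext p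
  cases p with
  | zero => simp
  | succ p =>
    rw [Multiset.count_filter_of_pos p.succ_pos, Multiset.count_filter_of_pos p.succ_pos]
    have hμ := countP_lt_eq_count_add_countP_lt p μ
    have hν := countP_lt_eq_count_add_countP_lt p ν
    rw [hcountP, hcountP] at hμ
    exact Nat.add_right_cancel (hμ.symm.trans hν)

theorem sum_filter_lt (t : ℕ) (μ : Multiset ℕ) :
    (μ.filter (t < ·)).sum = excess t μ + μ.countP (t < ·) * t := by
  induction μ using Multiset.induction with
  | empty => simp [excess]
  | cons p μ ih =>
    rw [Multiset.filter_cons, Multiset.sum_add, ih, excess_cons, Multiset.countP_cons]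
    split_ifs
    · rw [Multiset.sum_singleton, add_mul]
      omega
    · rw [Multiset.sum_zero, add_zero]
      omega

theorem sum_le_excess_add (t : ℕ) (μ : Multiset ℕ) : μ.sum ≤ excess t μ + μ.card * t := by
  induction μ using Multiset.induction with
  | empty => simp
  | cons p μ ih =>
    rw [Multiset.sum_cons, excess_cons, Multiset.card_cons, add_mul]
    omega

theorem excess_mono {μ ν : Multiset ℕ} (h : μ ≤ ν) (t : ℕ) : excess t μ ≤ excess t ν := by
  obtain ⟨ρ, rfl⟩ := Multiset.le_iff_exists_add.1 h
  simp

theorem sum_le_kLargestSum {μ s : Multiset ℕ} (h : s ≤ μ) : s.sum ≤ kLargestSum μ s.card :=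
  Multiset.le_sup <| Multiset.mem_map_of_mem _ <|
    Multiset.mem_filter.2 ⟨Multiset.mem_powerset.2 h, le_rfl⟩

theorem kLargestSum_le_excess_add (t k : ℕ) (μ : Multiset ℕ) :
    kLargestSum μ k ≤ excess t μ + k * t := by
  refine Multiset.sup_le.2 fun x hx => ?_
  obtain ⟨s, hs, rfl⟩ := Multiset.mem_map.1 hx
  rw [Multiset.mem_filter, Multiset.mem_powerset] at hs
  exact (sum_le_excess_add t s).trans
    (Nat.add_le_add (excess_mono hs.1 t) (Nat.mul_le_mul_right t hs.2))

theorem Dominates.excess_le {μ ν : Multiset ℕ} (h : Dominates μ ν) (t : ℕ) :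
    excess t μ ≤ excess t ν := by
  refine Nat.le_of_add_le_add_right (b := μ.countP (t < ·) * t) ?_
  calc excess t μ + μ.countP (t < ·) * t
      = (μ.filter (t < ·)).sum := (sum_filter_lt t μ).symm
    _ ≤ kLargestSum μ (μ.countP (t < ·)) := by
      rw [Multiset.countP_eq_card_filter]
      exact sum_le_kLargestSum (Multiset.filter_le _ _)
    _ ≤ kLargestSum ν (μ.countP (t < ·)) := h _
    _ ≤ excess t ν + μ.countP (t < ·) * t := kLargestSum_le_excess_add t _ ν

theorem excess_shift {a b : ℕ} (hba : b < a) (t : ℕ) (μ : Multiset ℕ) :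
    excess t (b ::ₘ (a + 1) ::ₘ μ) =
      excess t ((b + 1) ::ₘ a ::ₘ μ) + if b < t ∧ t ≤ a then 1 else 0 := by
  simp only [excess_cons]
  split_ifs <;> omega

theorem exists_maximal_interval_excess_lt {μ ν : Multiset ℕ} (hsum : μ.sum = ν.sum)
    (hle : ∀ t, excess t μ ≤ excess t ν) {t₀ : ℕ} (ht₀ : excess t₀ μ ≠ excess t₀ ν) :
    ∃ c d, c < d ∧ excess c μ = excess c ν ∧ excess (d + 1) μ = excess (d + 1) ν ∧
      ∀ t, c < t → t ≤ d → excess t μ < excess t ν := by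
  classical
  have hex : ∃ t, t₀ < t ∧ excess t μ = excess t ν :=
    ⟨t₀ + μ.sum + 1, by omega, by
      rw [excess_eq_zero_of_sum_le (by omega), excess_eq_zero_of_sum_le (by omega)]⟩
  obtain ⟨hlt, heq⟩ := Nat.find_spec hex
  have hmin := fun t => Nat.find_min hex (m := t)
  generalize Nat.find hex = d at hlt heq hmin
  obtain ⟨d, rfl⟩ := Nat.exists_eq_succ_of_ne_zero (Nat.ne_zero_of_lt hlt)
  set c := Nat.findGreatest (fun t => excess t μ = excess t ν) t₀
  have hcμ : excess c μ = excess c ν :=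
    Nat.findGreatest_spec (P := fun t => excess t μ = excess t ν) (Nat.zero_le t₀) (by simpa)
  have hct₀ : c < t₀ :=
    (Nat.findGreatest_le t₀).lt_of_ne fun h => ht₀ (by rwa [← h])
  refine ⟨c, d, by omega, hcμ, heq, fun t hct htd => (hle t).lt_of_ne fun h => ?_⟩
  rcases le_or_gt t t₀ with htt₀ | htt₀
  · exact Nat.findGreatest_is_greatest hct htt₀ h
  · exact hmin t (by omega) ⟨htt₀, h⟩

theorem exists_pair_le_of_one_lt_card {α : Type*} [LinearOrder α] {s : Multiset α}
    (h : 1 < s.card) : ∃ x y, x ≤ y ∧ {x, y} ≤ s := by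
  obtain ⟨x, hx⟩ := Multiset.card_pos_iff_exists_mem.1 (zero_lt_one.trans h)
  obtain ⟨s, rfl⟩ := Multiset.exists_cons_of_mem hx
  rw [Multiset.card_cons, Nat.lt_add_left_iff_pos] at h
  obtain ⟨y, hy⟩ := Multiset.card_pos_iff_exists_mem.1 h
  have hle : {x, y} ≤ x ::ₘ s := Multiset.cons_le_cons x (Multiset.singleton_le.2 hy)
  rcases le_total x y with hxy | hyx
  · exact ⟨x, y, hxy, hle⟩
  · exact ⟨y, x, hyx, by rwa [Multiset.pair_comm]⟩

theorem exists_shift_excess_le {μ ν : Multiset ℕ} (hsum : μ.sum = ν.sum)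
    (hle : ∀ t, excess t μ ≤ excess t ν) (hne : ¬ ∀ t, excess t μ = excess t ν) :
    ∃ a b ρ, b < a ∧ μ = (b + 1) ::ₘ a ::ₘ ρ ∧ excess a μ < excess a ν ∧
      ∀ t, excess t (b ::ₘ (a + 1) ::ₘ ρ) ≤ excess t ν := by
  obtain ⟨t₀, ht₀⟩ := not_forall.1 hne
  obtain ⟨c, d, hcd, hc, hd, hlt⟩ := exists_maximal_interval_excess_lt hsum hle ht₀
  have hcard : 1 < (μ.filter fun p => c < p ∧ p < d + 1).card := by
    have hμ := countP_lt_eq_card_filter_add_countP_le (by omega : c < d + 1) μ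
    have hν := countP_lt_eq_card_filter_add_countP_le (by omega : c < d + 1) ν
    have hμc := excess_succ_add_countP c μ
    have hνc := excess_succ_add_countP c ν
    have hμd := excess_succ_add_countP d μ
    have hνd := excess_succ_add_countP d ν
    have hltc := hlt (c + 1) (by omega) (by omega)
    have hltd := hlt d hcd le_rfl
    simp only [Nat.succ_le_iff] at hμ hν
    omega
  obtain ⟨x, y, hx, hy, hxy, ρ, rfl⟩ : ∃ x y, (c < x ∧ x ≤ d) ∧ (c < y ∧ y ≤ d) ∧ x ≤ y ∧
      ∃ ρ, μ = x ::ₘ y ::ₘ ρ := by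
    obtain ⟨x, y, hxy, hle⟩ := exists_pair_le_of_one_lt_card hcard
    have hmem : ∀ p ∈ ({x, y} : Multiset ℕ), c < p ∧ p ≤ d := fun p hp =>
      (Multiset.of_mem_filter (Multiset.mem_of_le hle hp)).imp_right Nat.le_of_lt_succ
    obtain ⟨ρ, hρ⟩ := Multiset.le_iff_exists_add.1 (hle.trans (Multiset.filter_le _ _))
    exact ⟨x, y, hmem x (by simp), hmem y (by simp), hxy, ρ, by simpa using hρ⟩
  obtain ⟨b, rfl⟩ := Nat.exists_eq_succ_of_ne_zero (Nat.ne_zero_of_lt hx.1)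
  refine ⟨y, b, ρ, hxy, rfl, hlt y hy.1 hy.2, fun t => ?_⟩
  rw [excess_shift hxy]
  split_ifs with ht
  · exact hlt t (by omega) (by omega)
  · exact hle t

/-- Equality of all excesses identifies `μ'` and `ν` up to parts `0`. -/
theorem exists_excess_eq_of_shift {P : Multiset ℕ → Prop}
    (hP : ∀ a b ρ, b < a → P ((b + 1) ::ₘ a ::ₘ ρ) → P (b ::ₘ (a + 1) ::ₘ ρ))
    {μ ν : Multiset ℕ} (hsum : μ.sum = ν.sum) (hle : ∀ t, excess t μ ≤ excess t ν) (h : P μ) :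
    ∃ μ', P μ' ∧ ∀ t, excess t μ' = excess t ν := by
  induction hD : ∑ t ∈ Finset.range ν.sum, (excess t ν - excess t μ)
    using Nat.strong_induction_on generalizing μ with
  | _ D ih =>
  subst hD
  by_cases heq : ∀ t, excess t μ = excess t ν
  · exact ⟨μ, h, heq⟩
  obtain ⟨a, b, ρ, hba, rfl, hlt, hle'⟩ := exists_shift_excess_le hsum hle heq
  refine ih _ (Finset.sum_lt_sum (fun t _ => ?_) ⟨a, ?_, ?_⟩) ?_ hle' (hP a b ρ hba h) rfl
  · rw [excess_shift hba]
    omega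
  · refine Finset.mem_range.2 (lt_of_not_ge fun ha => ?_)
    rw [excess_eq_zero_of_sum_le ha] at hlt
    exact Nat.not_lt_zero _ hlt
  · rw [excess_shift hba, if_pos ⟨hba, le_rfl⟩]
    omega
  · rw [← hsum]
    simp only [Multiset.sum_cons]
    omega

end Dominance

section PairBalanced

variable {F ι : Type*} [Field F] [Fintype ι] [DecidableEq ι] {φ : GL ι F → ℚ} {σ τ : Multiset ℕ}

/-- The pair of partitions `(σ, τ)` recorded as one multiset of tagged parts, the parts of `σ`
(those whose quotients carry a basis) being tagged `true`. -/
def taggedParts (σ τ : Multiset ℕ) : Multiset (ℕ × Bool) :=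
  σ.map (·, true) + τ.map (·, false)

/-- All coset sums of `φ` vanish over the flag stabilizers of type `(σ, τ)`. -/
def PairBalanced (φ : GL ι F → ℚ) (σ τ : Multiset ℕ) : Prop :=
  TypeBalanced φ (taggedParts σ τ)

@[simp]
theorem taggedParts_cons_left (p : ℕ) (σ τ : Multiset ℕ) :
    taggedParts (p ::ₘ σ) τ = (p, true) ::ₘ taggedParts σ τ := by
  simp [taggedParts]

@[simp]
theorem taggedParts_cons_right (p : ℕ) (σ τ : Multiset ℕ) :
    taggedParts σ (p ::ₘ τ) = (p, false) ::ₘ taggedParts σ τ := by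
  simp [taggedParts]

variable [Finite F]

theorem PairBalanced.of_cons_zero (h : PairBalanced φ σ (0 ::ₘ τ)) : PairBalanced φ σ τ :=
  TypeBalanced.of_cons_zero (by rwa [PairBalanced, taggedParts_cons_right] at h)

theorem PairBalanced.untag {p : ℕ} (h : PairBalanced φ (p ::ₘ σ) τ) :
    PairBalanced φ σ (p ::ₘ τ) := by
  rw [PairBalanced, taggedParts_cons_left] at h
  rw [PairBalanced, taggedParts_cons_right]
  exact h.untag

theorem PairBalanced.split {a b : ℕ} (h : PairBalanced φ ((a + b) ::ₘ σ) τ) :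
    PairBalanced φ (a ::ₘ b ::ₘ σ) τ := by
  rw [PairBalanced, taggedParts_cons_left] at h
  rw [PairBalanced, taggedParts_cons_left, taggedParts_cons_left]
  exact h.split

theorem PairBalanced.shift {a b : ℕ} (hba : b ≤ a)
    (h : PairBalanced φ σ ((b + 1) ::ₘ a ::ₘ τ)) : PairBalanced φ σ (b ::ₘ (a + 1) ::ₘ τ) := by
  rw [PairBalanced, taggedParts_cons_right, taggedParts_cons_right] at h ⊢
  exact h.shift hba

theorem PairBalanced.split_sum {s : Multiset ℕ} (hs : s ≠ 0)
    (h : PairBalanced φ (s.sum ::ₘ σ) τ) : PairBalanced φ (s + σ) τ := by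
  induction s using Multiset.induction generalizing σ with
  | empty => exact absurd rfl hs
  | cons a s ih =>
    rw [Multiset.sum_cons] at h
    rcases eq_or_ne s 0 with rfl | hs'
    · simpa using h
    · have hsplit := h.split
      rw [Multiset.cons_swap] at hsplit
      rw [Multiset.cons_add, ← Multiset.add_cons]
      exact ih hs' hsplit

theorem PairBalanced.split_groups {M : Multiset (Multiset ℕ)} (hM : 0 ∉ M)
    (h : PairBalanced φ (M.map Multiset.sum + σ) τ) : PairBalanced φ (M.sum + σ) τ := by
  induction M using Multiset.induction generalizing σ with
  | empty => simpa using h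
  | cons s M ih =>
    rw [Multiset.mem_cons, not_or] at hM
    rw [Multiset.map_cons, Multiset.cons_add] at h
    have hsplit := h.split_sum (Ne.symm hM.1)
    rw [add_left_comm] at hsplit
    rw [Multiset.sum_cons, add_comm s, add_assoc]
    exact ih hM.2 hsplit

theorem PairBalanced.untag_replicate {m p : ℕ}
    (h : PairBalanced φ (σ + Multiset.replicate m p) τ) :
    PairBalanced φ σ (τ + Multiset.replicate m p) := by
  induction m generalizing τ with
  | zero => simpa using h
  | succ m ih =>
    rw [Multiset.replicate_succ, Multiset.add_cons] at h
    rw [Multiset.replicate_succ, Multiset.add_cons, ← Multiset.cons_add]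
    exact ih h.untag

theorem PairBalanced.of_refines (hσ : 0 ∉ σ) {κ : Multiset ℕ} (href : Refines κ σ)
    (h : PairBalanced φ σ τ) :
    PairBalanced φ κ (τ + Multiset.replicate (σ.sum - κ.sum) 1) := by
  obtain ⟨-, M, hM, hMσ⟩ := href
  refine PairBalanced.untag_replicate ?_
  rw [← hM, ← add_zero M.sum]
  refine PairBalanced.split_groups (fun h0 => hσ ?_) (by rwa [hMσ, add_zero])
  rw [← hMσ]
  exact Multiset.mem_map_of_mem Multiset.sum h0

theorem PairBalanced.shift_filter_pos {a b : ℕ} (hba : b < a)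
    (h : PairBalanced φ σ (((b + 1) ::ₘ a ::ₘ τ).filter (0 < ·))) :
    PairBalanced φ σ ((b ::ₘ (a + 1) ::ₘ τ).filter (0 < ·)) := by
  rw [Multiset.filter_cons_of_pos _ b.succ_pos,
    Multiset.filter_cons_of_pos _ (Nat.zero_lt_of_lt hba)] at h
  have hshift := h.shift hba.le
  rcases b.eq_zero_or_pos with rfl | hb
  · rw [Multiset.filter_cons_of_neg _ (lt_irrefl 0), Multiset.filter_cons_of_pos _ a.succ_pos]
    exact hshift.of_cons_zero
  · rwa [Multiset.filter_cons_of_pos (p := (0 < ·)) _ hb, Multiset.filter_cons_of_pos _ a.succ_pos]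

theorem PairBalanced.of_excess_le {τ' : Multiset ℕ} (hτ : 0 ∉ τ) (hτ' : 0 ∉ τ')
    (hsum : τ.sum = τ'.sum) (hle : ∀ t, excess t τ ≤ excess t τ') (h : PairBalanced φ σ τ) :
    PairBalanced φ σ τ' := by
  have filter_pos_eq {μ : Multiset ℕ} (hμ : 0 ∉ μ) : μ.filter (0 < ·) = μ :=
    Multiset.filter_eq_self.2 fun p hp => Nat.pos_of_ne_zero fun h => hμ (h ▸ hp)
  obtain ⟨μ, hμ, heq⟩ :=
    exists_excess_eq_of_shift (P := fun μ => PairBalanced φ σ (μ.filter (0 < ·)))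
      (fun a b ρ hba hρ => hρ.shift_filter_pos hba) hsum hle ((filter_pos_eq hτ).symm ▸ h)
  rwa [filter_pos_eq_of_excess_eq heq, filter_pos_eq hτ'] at hμ

theorem excess_add_replicate_one_le {τ τ' : Multiset ℕ} {m : ℕ} (hsum : τ.sum + m = τ'.sum)
    (hdom : Dominates τ τ') (t : ℕ) : excess t (τ + Multiset.replicate m 1) ≤ excess t τ' := by
  cases t with
  | zero => simp [hsum]
  | succ t => simpa [excess] using hdom.excess_le (t + 1)

theorem PairBalanced.of_refines_of_dominates {σ' τ' : Multiset ℕ} (hσ : 0 ∉ σ) (hτ : 0 ∉ τ)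
    (hτ' : 0 ∉ τ') (hsum : σ.sum + τ.sum = σ'.sum + τ'.sum) (href : Refines σ' σ)
    (hdom : Dominates τ τ') (h : PairBalanced φ σ τ) : PairBalanced φ σ' τ' := by
  have hsum' : τ.sum + (σ.sum - σ'.sum) = τ'.sum := by
    have := href.1
    omega
  refine (h.of_refines hσ href).of_excess_le ?_ hτ' ?_ (excess_add_replicate_one_le hsum' hdom)
  · simp [hτ, Multiset.mem_replicate]
  · simpa using hsum'

end PairBalanced

section LinearIndependence

theorem finrank_map_mkQ_add {F V : Type*} [Field F] [AddCommGroup V] [Module F V]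
    [FiniteDimensional F V] {A B : Submodule F V} (hAB : A ≤ B) :
    finrank F (B.map A.mkQ) + finrank F A = finrank F B := by
  have := (A.mkQ.comp B.subtype).finrank_range_add_finrank_ker
  rwa [LinearMap.range_comp, Submodule.range_subtype, LinearMap.ker_comp, Submodule.ker_mkQ,
    (Submodule.comapSubtypeEquivOfLe hAB).finrank_eq] at this

variable {K M κ : Type*} [Ring K] [AddCommGroup M] [Module K M]

theorem linearIndependent_mkQ_iff [Fintype κ] {W : Submodule K M} {v : κ → M} :
    LinearIndependent K (fun m => W.mkQ (v m)) ↔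
      ∀ c : κ → K, ∑ m, c m • v m ∈ W → ∀ m, c m = 0 := by
  simp only [Fintype.linearIndependent_iff, ← map_smul, ← map_sum]
  simp only [Submodule.mkQ_apply, Submodule.Quotient.mk_eq_zero]

theorem linearIndependent_sigma_of_quotients {ι : Type*} {κ : ι → Type*} [LinearOrder ι]
    [Finite ι] [∀ i, Finite (κ i)] {W : ι → Submodule K M} {v : ∀ i, κ i → M}
    (hv : ∀ i j, i < j → ∀ m, v i m ∈ W j)
    (hind : ∀ i, LinearIndependent K fun m => (W i).mkQ (v i m)) :
    LinearIndependent K fun s : Σ i, κ i => v s.1 s.2 := by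
  classical
  have := Fintype.ofFinite ι
  have (i : ι) := Fintype.ofFinite (κ i)
  refine Fintype.linearIndependent_iff.2 fun c hc => ?_
  suffices ∀ i m, c ⟨i, m⟩ = 0 from fun s => this s.1 s.2
  intro i
  induction i using WellFoundedGT.induction with | _ i later_eq_zero
  refine linearIndependent_mkQ_iff.1 (hind i) _ ?_
  rw [Fintype.sum_sigma, ← Finset.add_sum_erase _ _ (Finset.mem_univ i)] at hc
  rw [eq_neg_of_add_eq_zero_left hc]
  refine neg_mem (sum_mem fun j hj => sum_mem fun m _ => ?_)
  rcases (Finset.ne_of_mem_erase hj).lt_or_gt with hji | hij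
  · exact Submodule.smul_mem _ _ (hv j i hji m)
  · rw [later_eq_zero j hij m, zero_smul]
    exact zero_mem _

end LinearIndependence

section Flags

open scoped Pointwise Matrix

theorem exists_smul_single_eq {F ι : Type*} [Field F] [Fintype ι] [DecidableEq ι]
    {w : ι → ι → F} (hw : LinearIndependent F w) :
    ∃ g : GL ι F, ∀ i, g • (Pi.single i 1 : ι → F) = w i := by
  obtain ⟨g, hg⟩ := Matrix.linearIndependent_cols_iff_isUnit.1
    (show LinearIndependent F (Matrix.of w)ᵀ.col from hw)
  refine ⟨g, fun i => ?_⟩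
  change (g : Matrix ι ι F) *ᵥ Pi.single i 1 = w i
  rw [hg, Matrix.mulVec_single_one]
  rfl

theorem smul_single_apply {F ι : Type*} [Field F] [Fintype ι] [DecidableEq ι] (g : GL ι F)
    (i j : ι) : (g • (Pi.single j 1 : ι → F)) i = g i j := by
  change ((g : Matrix ι ι F) *ᵥ Pi.single j 1) i = g i j
  rw [Matrix.mulVec_single_one]
  rfl

variable {n q : ℕ}

theorem card_index_eq (ρ : Composition n) (i : Fin ρ.length) :
    Nat.card {x // ρ.index x = i} = ρ.blocksFun i := by
  have hfib := (ρ.blocksFinEquiv.subtypeEquiv (p := fun s => s.1 = i)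
    (q := fun x => ρ.index x = i) fun s => by
      rw [show ρ.blocksFinEquiv s = ρ.embedding s.1 s.2 from rfl, ρ.index_embedding])
  rw [← Nat.card_congr hfib, Nat.card_congr (Equiv.sigmaSubtype i), Nat.card_fin]

/-- The span of the standard basis vectors in the first `j` blocks of the composition `ρ`. -/
noncomputable def blockSpan (F : Type*) [Field F] (ρ : Composition n) (j : Fin (ρ.length + 1)) :
    Submodule F (Fin n → F) :=
  Pi.spanSubset F {x | (ρ.index x).castSucc < j}

section BlockSpan

variable {F : Type*} [Field F] (ρ : Composition n)

theorem single_embedding_mem_blockSpan (i : Fin ρ.length) (m : Fin (ρ.blocksFun i)) :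
    Pi.single (ρ.embedding i m) 1 ∈ blockSpan F ρ i.succ := by
  refine Pi.mem_spanSubset_iff.2 fun x hx => Pi.single_eq_of_ne ?_ 1
  rintro rfl
  exact hx (by simp)

theorem blockSpan_zero : blockSpan F ρ 0 = ⊥ :=
  eq_bot_iff.2 fun _ hv => funext fun x => Pi.mem_spanSubset_iff.1 hv x (Fin.not_lt_zero _)

theorem blockSpan_last : blockSpan F ρ (Fin.last _) = ⊤ :=
  eq_top_iff.2 fun _ _ => Pi.mem_spanSubset_iff.2 fun _ hx => absurd (Fin.castSucc_lt_last _) hx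

theorem blockSpan_mono : Monotone (blockSpan F ρ) := fun _ _ hij _ hv =>
  Pi.mem_spanSubset_iff.2 fun x hx =>
    Pi.mem_spanSubset_iff.1 hv x fun h => hx (lt_of_lt_of_le h hij)

theorem finrank_blockSpan_succ (i : Fin ρ.length) :
    finrank F (blockSpan F ρ i.succ) = finrank F (blockSpan F ρ i.castSucc) + ρ.blocksFun i := by
  have hunion : {x | (ρ.index x).castSucc < i.succ} =
      {x | (ρ.index x).castSucc < i.castSucc} ∪ {x | ρ.index x = i} := by
    ext x
    simp [le_iff_lt_or_eq]
  have hdisj : Disjoint {x | (ρ.index x).castSucc < i.castSucc} {x | ρ.index x = i} :=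
    Set.disjoint_left.2 fun x hlt heq => (Fin.castSucc_lt_castSucc_iff.1 hlt).ne heq
  rw [blockSpan, blockSpan, Pi.dim_spanSubset, Pi.dim_spanSubset, hunion,
    Set.ncard_union_eq hdisj, ← card_index_eq ρ i]
  rfl

theorem forall_smul_blockSpan_eq_iff (g : GL (Fin n) F) :
    (∀ j, g • blockSpan F ρ j = blockSpan F ρ j) ↔
      ∀ x y, ρ.index y < ρ.index x → g x y = 0 := by
  refine ⟨fun h x y hyx => ?_, fun h j => ?_⟩
  · exact (smul_spanSubset_le_iff g _ _).1 (h (ρ.index x).castSucc).le x (by simp) y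
      (Fin.castSucc_lt_castSucc_iff.2 hyx)
  · refine Submodule.eq_of_le_of_finrank_eq ?_ (finrank_smul_eq g _)
    refine (smul_spanSubset_le_iff g _ _).2 fun x hx y hy => h x y ?_
    exact Fin.castSucc_lt_castSucc_iff.1 (lt_of_lt_of_le hy (not_lt.1 hx))

theorem smul_single_sub_single_mem_blockSpan_iff (g : GL (Fin n) F) (i : Fin ρ.length)
    (y : Fin n) : g • (Pi.single y 1 : Fin n → F) - Pi.single y 1 ∈ blockSpan F ρ i.castSucc ↔
      ∀ x, i ≤ ρ.index x → g x y = (1 : Matrix (Fin n) (Fin n) F) x y := by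
  rw [blockSpan, Pi.mem_spanSubset_iff]
  refine forall_congr' fun x => imp_congr (by simp) ?_
  rw [Pi.sub_apply, sub_eq_zero, smul_single_apply, Matrix.one_apply, Pi.single_apply]

end BlockSpan

variable {F : Type} [Field F] {α : SigmaNQ q n} {g h : GL (Fin n) F} {A C D : AlphaFlag F α}

/-- The flag of the spans of initial segments of the standard basis, with the bases of the
quotients induced by the standard basis. -/
noncomputable def standardFlag (F : Type) [Field F] (α : SigmaNQ q n) : AlphaFlag F α where
  V := blockSpan F α.ρ
  mono := blockSpan_mono _
  bot_eq := blockSpan_zero _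
  top_eq := blockSpan_last _
  dim := finrank_blockSpan_succ _
  B i _ m := Pi.single (α.ρ.embedding i m) 1
  B_mem i _ m := single_embedding_mem_blockSpan α.ρ i m
  B_indep i _ := linearIndependent_mkQ_iff.2 fun c hc m => by
    have := Pi.mem_spanSubset_iff.1 hc (α.ρ.embedding i m) (by simp)
    simpa [Finset.sum_apply, Pi.single_apply] using this

theorem mapsAlphaFlag_iff : MapsAlphaFlag F g A C ↔ (∀ j, g • A.V j = C.V j) ∧
    ∀ i hi m, g • A.B i hi m - C.B i hi m ∈ C.V i.castSucc :=
  Iff.rfl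

theorem MapsAlphaFlag.mul (hg : MapsAlphaFlag F g A C) (hh : MapsAlphaFlag F h C D) :
    MapsAlphaFlag F (h * g) A D := by
  rw [mapsAlphaFlag_iff] at *
  refine ⟨fun j => by rw [mul_smul, hg.1, hh.1], fun i hi m => ?_⟩
  have hmem := (hh.1 i.castSucc).le (Submodule.smul_mem_pointwise_smul _ h _ (hg.2 i hi m))
  rw [smul_sub, smul_smul] at hmem
  simpa using add_mem hmem (hh.2 i hi m)

theorem MapsAlphaFlag.inv (hg : MapsAlphaFlag F g A C) : MapsAlphaFlag F g⁻¹ C A := by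
  rw [mapsAlphaFlag_iff] at *
  have hV (j) : g⁻¹ • C.V j = A.V j := by rw [← hg.1, inv_smul_smul]
  refine ⟨hV, fun i hi m => ?_⟩
  have hmem := (hV i.castSucc).le (Submodule.smul_mem_pointwise_smul _ g⁻¹ _ (hg.2 i hi m))
  rw [smul_sub, inv_smul_smul] at hmem
  simpa using neg_mem hmem

/-- The image of a flag under an invertible matrix. -/
def AlphaFlag.map (g : GL (Fin n) F) (A : AlphaFlag F α) : AlphaFlag F α where
  V j := g • A.V j
  mono _ _ hij := Submodule.map_mono (A.mono hij)
  bot_eq := by rw [A.bot_eq]; exact Submodule.map_bot _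
  top_eq := by
    rw [A.top_eq]
    exact Submodule.eq_top_of_finrank_eq ((finrank_smul_eq g ⊤).trans (finrank_top F _))
  dim i := by rw [finrank_smul_eq, finrank_smul_eq, A.dim]
  B i hi m := g • A.B i hi m
  B_mem i hi m := Submodule.smul_mem_pointwise_smul _ g _ (A.B_mem i hi m)
  B_indep i hi := linearIndependent_mkQ_iff.2 fun c hc => by
    refine linearIndependent_mkQ_iff.1 (A.B_indep i hi) c ?_
    simp only [← smul_comm g, ← Finset.smul_sum] at hc
    obtain ⟨w, hw, hwc⟩ := hc
    exact MulAction.injective g hwc ▸ hw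

theorem mapsAlphaFlag_map (g : GL (Fin n) F) (A : AlphaFlag F α) : MapsAlphaFlag F g A (A.map g) :=
  mapsAlphaFlag_iff.2 ⟨fun _ => rfl, fun _ _ _ => by simp [AlphaFlag.map]⟩

theorem AlphaFlag.finrank_V_eq (A C : AlphaFlag F α) (j : Fin (α.ρ.length + 1)) :
    finrank F (A.V j) = finrank F (C.V j) := by
  induction j using Fin.induction with
  | zero => rw [A.bot_eq, C.bot_eq]
  | succ i ih => rw [A.dim, C.dim, ih]

theorem AlphaFlag.exists_lift_basis (A : AlphaFlag F α) (i : Fin α.ρ.length) :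
    ∃ v : Fin (α.ρ.blocksFun i) → (Fin n → F), (∀ m, v m ∈ A.V i.succ) ∧
      LinearIndependent F (fun m => (A.V i.castSucc).mkQ (v m)) ∧
      ∀ hi : i ∈ α.I, A.B i hi = v := by
  by_cases hi : i ∈ α.I
  · exact ⟨A.B i hi, A.B_mem i hi, A.B_indep i hi, fun _ => rfl⟩
  · have hfin : finrank F ((A.V i.succ).map (A.V i.castSucc).mkQ) = α.ρ.blocksFun i := by
      have := finrank_map_mkQ_add (A.mono i.castSucc_lt_succ.le)
      have := A.dim i
      omega
    let b := finBasisOfFinrankEq F _ hfin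
    choose v hv hvb using fun m => Submodule.mem_map.1 (b m).2
    refine ⟨v, hv, ?_, fun h => absurd h hi⟩
    simp only [hvb]
    exact b.linearIndependent.map' (Submodule.subtype _) (Submodule.ker_subtype _)

theorem AlphaFlag.exists_mapsAlphaFlag (A : AlphaFlag F α) :
    ∃ g, MapsAlphaFlag F g (standardFlag F α) A := by
  choose v hv hind hvB using A.exists_lift_basis
  have hmono {i j : Fin α.ρ.length} (hij : i < j) : A.V i.succ ≤ A.V j.castSucc :=
    A.mono (Fin.succ_le_castSucc_iff.2 hij)
  have hli := linearIndependent_sigma_of_quotients (fun i j hij m => hmono hij (hv i m)) hind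
  obtain ⟨g, hg⟩ :=
    exists_smul_single_eq ((linearIndependent_equiv α.ρ.blocksFinEquiv.symm).2 hli)
  have hgv (i m) : g • (Pi.single (α.ρ.embedding i m) 1 : Fin n → F) = v i m :=
    (hg (α.ρ.blocksFinEquiv ⟨i, m⟩)).trans
      (congrArg (fun s : Σ i, Fin (α.ρ.blocksFun i) => v s.1 s.2)
        (α.ρ.blocksFinEquiv.symm_apply_apply ⟨i, m⟩))
  have hle (j) : g • (standardFlag F α).V j ≤ A.V j := by
    refine (Submodule.map_span_le _ _ _).2 ?_
    rintro _ ⟨x, hx, rfl⟩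
    have hgx := hgv (α.ρ.index x) (α.ρ.invEmbedding x)
    rw [α.ρ.embedding_comp_inv] at hgx
    rw [Pi.basisFun_apply]
    exact (congrArg (· ∈ A.V j) hgx).mpr (A.mono (Fin.castSucc_lt_iff_succ_le.1 hx) (hv _ _))
  refine ⟨g, mapsAlphaFlag_iff.2 ⟨fun j => Submodule.eq_of_le_of_finrank_eq (hle j) ?_,
    fun i hi m => ?_⟩⟩
  · rw [finrank_smul_eq, AlphaFlag.finrank_V_eq]
  · rw [hvB i hi, ← hgv i m]
    exact (sub_self (g • (Pi.single (α.ρ.embedding i m) 1 : Fin n → F))).symm ▸ zero_mem _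

theorem isTransitiveTransport_mapsAlphaFlag :
    IsTransitiveTransport (MapsAlphaFlag F (α := α)) where
  mul := MapsAlphaFlag.mul
  inv := MapsAlphaFlag.inv
  exists_image g A := ⟨A.map g, mapsAlphaFlag_map g A⟩
  exists_transporter A C := by
    obtain ⟨a, ha⟩ := A.exists_mapsAlphaFlag
    obtain ⟨c, hc⟩ := C.exists_mapsAlphaFlag
    exact ⟨c * a⁻¹, ha.inv.mul hc⟩

theorem mapsAlphaFlag_standardFlag_iff :
    MapsAlphaFlag F g (standardFlag F α) (standardFlag F α) ↔
      g ∈ blockTriangularSubgroup F α.ρ.index fun i => decide (i ∈ α.I) := by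
  have hV : (∀ j, g • (standardFlag F α).V j = (standardFlag F α).V j) ↔
      ∀ x y, α.ρ.index y < α.ρ.index x → g x y = 0 := forall_smul_blockSpan_eq_iff α.ρ g
  have hB (i hi m) : g • (standardFlag F α).B i hi m - (standardFlag F α).B i hi m ∈
      (standardFlag F α).V i.castSucc ↔ ∀ x, i ≤ α.ρ.index x →
        g x (α.ρ.embedding i m) = (1 : Matrix (Fin n) (Fin n) F) x (α.ρ.embedding i m) :=
    smul_single_sub_single_mem_blockSpan_iff α.ρ g i _
  simp only [mapsAlphaFlag_iff, hV, hB, mem_blockTriangularSubgroup, decide_eq_true_eq,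
    forall_and]
  refine and_congr_right fun hzero => ⟨fun h x y hxy hy => ?_, fun h i hi m x hix => ?_⟩
  · have hxy' := h _ hy (α.ρ.invEmbedding y) x hxy.ge
    rwa [α.ρ.embedding_comp_inv] at hxy'
  · rcases hix.eq_or_lt with hix | hix
    · exact h x _ (by simp [hix]) (by simpa using hi)
    · rw [hzero x _ (by simpa using hix), Matrix.one_apply_ne]
      rintro rfl
      simp at hix

theorem transitiveOnAlphaFlags_iff_cosetBalanced [Fintype F] (Y : Set (GL (Fin n) F)) :
    TransitiveOnAlphaFlags F Y α ↔ CosetBalanced (centeredIndicator Y)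
      (blockTriangularSubgroup F α.ρ.index fun i => decide (i ∈ α.I)) :=
  (isTransitiveTransport_mapsAlphaFlag.cosetBalanced_centeredIndicator_iff
    (fun _ => mapsAlphaFlag_standardFlag_iff.symm) Y).symm

end Flags

section Types

theorem taggedParts_inj {σ τ σ' τ' : Multiset ℕ} :
    taggedParts σ τ = taggedParts σ' τ' ↔ σ = σ' ∧ τ = τ' := by
  refine ⟨fun h => ⟨?_, ?_⟩, fun h => by rw [h.1, h.2]⟩
  · simpa [taggedParts, Multiset.filter_map] using
      congrArg (fun M => (M.filter fun x => x.2 = true).map Prod.fst) h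
  · simpa [taggedParts, Multiset.filter_map] using
      congrArg (fun M => (M.filter fun x => x.2 = false).map Prod.fst) h

theorem mem_taggedParts {σ τ : Multiset ℕ} {p : ℕ} {b : Bool} :
    (p, b) ∈ taggedParts σ τ ↔ (b = true ∧ p ∈ σ) ∨ (b = false ∧ p ∈ τ) := by
  cases b <;> simp [taggedParts]

theorem map_fst_taggedParts (σ τ : Multiset ℕ) : (taggedParts σ τ).map Prod.fst = σ + τ := by
  simp [taggedParts]

variable {n q : ℕ}

theorem SigmaNQ.map_univ_eq_taggedParts (α : SigmaNQ q n) :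
    Finset.univ.val.map (fun i => (α.ρ.blocksFun i, decide (i ∈ α.I))) =
      taggedParts α.typeSigma α.typeTau := by
  have huniv : (Finset.univ : Finset (Fin α.ρ.length)).val = α.I.val + α.Iᶜ.val := by
    rw [← Finset.disjUnion_val (h := disjoint_compl_right), Finset.disjUnion_eq_union,
      Finset.union_compl]
  rw [huniv, Multiset.map_add, taggedParts, typeSigma, typeTau, Multiset.map_map,
    Multiset.map_map]
  congr 1
  · exact Multiset.map_congr rfl fun i hi => Prod.ext rfl (decide_eq_true hi)
  · exact Multiset.map_congr rfl fun i hi => Prod.ext rfl (decide_eq_false (by simpa using hi))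

theorem transitiveOnAlphaFlags_iff_pairBalanced {F : Type} [Field F] [Fintype F]
    {α : SigmaNQ q n} (Y : Set (GL (Fin n) F)) :
    TransitiveOnAlphaFlags F Y α ↔
      PairBalanced (centeredIndicator Y) α.typeSigma α.typeTau := by
  have htype : blockType α.ρ.index (fun i => decide (i ∈ α.I)) =
      taggedParts α.typeSigma α.typeTau := by
    simp only [blockType, card_index_eq, α.map_univ_eq_taggedParts]
  rw [transitiveOnAlphaFlags_iff_cosetBalanced, PairBalanced, ← htype]
  exact ⟨CosetBalanced.typeBalanced_blockType, fun h => h _ _ _ rfl⟩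

theorem InTheta.zero_notMem {σ τ : Multiset ℕ} (h : InTheta q n σ τ) : 0 ∉ σ ∧ 0 ∉ τ :=
  ⟨fun h0 => (h.1 0 h0).false, fun h0 => (h.2.1 0 h0).false⟩

theorem InTheta.exists_sigmaNQ {σ τ : Multiset ℕ} (h : InTheta q n σ τ) :
    ∃ α : SigmaNQ q n, α.typeSigma = σ ∧ α.typeTau = τ := by
  obtain ⟨hσ, hτ, hsum, htwo⟩ := h
  obtain ⟨L, hL⟩ : ∃ L : List (ℕ × Bool), (L : Multiset (ℕ × Bool)) = taggedParts σ τ :=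
    Quot.exists_rep _
  have hmem {x} (hx : x ∈ L) : (x.2 = true ∧ x.1 ∈ σ) ∨ (x.2 = false ∧ x.1 ∈ τ) :=
    mem_taggedParts.1 (hL ▸ Multiset.mem_coe.2 hx)
  let ρ : Composition n :=
    { blocks := L.map Prod.fst
      blocks_pos := by
        rintro p hp
        obtain ⟨x, hx, rfl⟩ := List.mem_map.1 hp
        exact (hmem hx).elim (fun h => hσ _ h.2) fun h => hτ _ h.2
      blocks_sum := by
        rw [← Multiset.sum_coe, ← Multiset.map_coe, hL, map_fst_taggedParts, Multiset.sum_add,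
          hsum] }
  have hlen : ρ.length = L.length := List.length_map _
  have hblock (i) : ρ.blocksFun i = (L.get (i.cast hlen)).1 := by
    simp [Composition.blocksFun, ρ]
  let α : SigmaNQ q n :=
    { ρ := ρ
      I := Finset.univ.filter fun i => (L.get (i.cast hlen)).2 = true
      two hq i hi := by
        rw [hblock]
        refine htwo hq _ ((hmem (L.get_mem _)).resolve_left fun h => hi ?_).2
        simpa using h.1 }
  refine ⟨α, taggedParts_inj.1 ?_⟩
  rw [← α.map_univ_eq_taggedParts, ← hL, Fin.univ_val_map]
  refine congrArg _ (List.ext_getElem (by simpa using hlen) fun i _ _ => ?_)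
  rw [List.getElem_ofFn]
  exact Prod.ext (hblock _) (Bool.eq_iff_iff.2 (by simp [α]))

end Types

/-- If `Y ⊆ GL(n,q)` is `(σ,τ)`-transitive, then `Y` is `(σ̂,τ̂)`-transitive for every
`(σ̂,τ̂) ∈ Θ_{n,q}` with `(σ,τ) ⪯ (σ̂,τ̂)`, i.e. such that `σ̂` refines `σ` and `τ ⊴ τ̂`. -/
theorem statement2 (q : ℕ) (hq : IsPrimePow q) (F : Type) [Field F] [Fintype F]
    (hF : Fintype.card F = q) (n : ℕ) (hn : 0 < n)
    (σ τ σ' τ' : Multiset ℕ) (hθ : InTheta q n σ τ) (hθ' : InTheta q n σ' τ')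
    (href : Refines σ' σ) (hdom : Dominates τ τ')
    (Y : Set (GL (Fin n) F)) (hY : STTransitive F q n Y σ τ) :
    STTransitive F q n Y σ' τ' := by
  obtain ⟨α, rfl, rfl, hα⟩ := hY
  obtain ⟨α', rfl, rfl⟩ := hθ'.exists_sigmaNQ
  have hbal := (transitiveOnAlphaFlags_iff_pairBalanced Y).1 hα
  refine ⟨α', rfl, rfl, (transitiveOnAlphaFlags_iff_pairBalanced Y).2 ?_⟩
  exact hbal.of_refines_of_dominates hθ.zero_notMem.1 hθ.zero_notMem.2 hθ'.zero_notMem.2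
    (hθ.2.2.1.trans hθ'.2.2.1.symm) href hdom
end

section
/- Let q be a prime power, let t be a positive integer, and let ε > 0. Then there exists N such that for every n ≥ N there is a nonempty t-design Y in GL(n,q) satisfying |Y|/|GL(n,q)| < ε. -/
/-- A subset `Y` of `GL(n,q)` is a `t`-design if it is transitive on ordered `t`-tuples of
linearly independent vectors of `F_q^n`: there is a constant `r` such that for any two
linearly independent `t`-tuples `a`, `b` there are exactly `r` elements `g ∈ Y` with
`g·(a m) = b m` for all `m`. -/
def IsTDesignGL (F : Type) [Field F] [Fintype F] (n t : ℕ) (Y : Set (GL (Fin n) F)) : Prop :=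
  ∃ r : ℕ, ∀ a b : Fin t → (Fin n → F), LinearIndependent F a → LinearIndependent F b →
    Nat.card {g : GL (Fin n) F // g ∈ Y ∧
      ∀ m, Matrix.mulVec (g : Matrix (Fin n) (Fin n) F) (a m) = b m} = r

/-!
Call a function on `GL(V)` `t`-resilient if it is equidistributed on every coset `g · Fix(U)` with
`dim U ≤ t`. Since the stabilizer of an independent `t`-tuple is the pointwise stabilizer of its
span, each fibre of a `t`-resilient function is a `t`-design, so it suffices to find `t`-resilient
functions with many values.

These are glued from smaller ones. Given `W ≤ V` and functions `f₁` on `GL(W)` and `f₂` on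
`GL(V ⧸ W)`, evaluate `f₁ + f₂` on the diagonal blocks of elements of the stabilizer of `W`, and
extend to `GL(V)` through a left transversal. As `dim (U ⊓ W) + dim (U + W) / W = dim U`, if `f₁` is
`s₁`-resilient, `f₂` is `s₂`-resilient and `dim U ≤ s₁ + s₂ + 1`, then one of the two blocks alone
already equidistributes the sum on the cosets of `Fix(U)`. Starting from equidistributed functions
`GL(m + 1, q) → F_q^m`, which exist because `q ^ m` divides `|GL(m + 1, q)|`, repeated gluing gives
`t`-resilient functions with `q ^ m` values as soon as `(t + 1) * (m + 1) ≤ n`.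
-/

open Module MulAction
open scoped Pointwise

section Equidistributed

variable {X Y Z : Type*}

/-- All fibres of `f` have the same number of elements; meant for finite `X`, as `Nat.card` does
not tell an infinite fibre from an empty one. -/
def Equidistributed (f : X → Z) : Prop :=
  ∀ c c', Nat.card {x // f x = c} = Nat.card {x // f x = c'}

theorem equidistributed_id : Equidistributed (id : X → X) := fun c c' => by simp

theorem equidistributed_comp_equiv_iff {f : X → Z} (e : Y ≃ X) :
    Equidistributed (fun y => f (e y)) ↔ Equidistributed f := by
  have card_fiber (c : Z) : Nat.card {y // f (e y) = c} = Nat.card {x // f x = c} :=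
    Nat.card_congr (e.subtypeEquiv fun _ => Iff.rfl)
  simp only [Equidistributed, card_fiber]

theorem equidistributed_comp_snd_iff [Finite Y] [Nonempty Y] {f : X → Z} :
    Equidistributed (fun p : Y × X => f p.2) ↔ Equidistributed f := by
  have card_fiber (c : Z) :
      Nat.card {p : Y × X // f p.2 = c} = Nat.card Y * Nat.card {x // f x = c} := by
    rw [← Nat.card_prod]
    exact Nat.card_congr
      { toFun p := (p.1.1, ⟨p.1.2, p.2⟩)
        invFun p := ⟨(p.1, p.2.1), p.2.2⟩ }
  simp only [Equidistributed, card_fiber, Nat.mul_right_inj Nat.card_pos.ne']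

namespace Equidistributed

theorem equiv_comp {f : X → Z} (hf : Equidistributed f) (e : Z ≃ Y) :
    Equidistributed fun x => e (f x) := by
  intro c c'
  simpa only [← e.eq_symm_apply] using hf (e.symm c) (e.symm c')

theorem of_prod [Finite X] [Finite Y] {f : X × Y → Z}
    (hf : ∀ x, Equidistributed fun y => f (x, y)) : Equidistributed f := by
  have := Fintype.ofFinite X
  have card_fiber (c : Z) : Nat.card {p // f p = c} = ∑ x, Nat.card {y // f (x, y) = c} := by
    rw [← Nat.card_sigma]
    exact Nat.card_congr (Equiv.subtypeProdEquivSigmaSubtype fun x y => f (x, y) = c)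
  intro c c'
  simp only [card_fiber, hf _ c c']

theorem card_mul_card_fiber [Finite X] [Finite Z] {f : X → Z} (hf : Equidistributed f) (c : Z) :
    Nat.card Z * Nat.card {x // f x = c} = Nat.card X := by
  have := Fintype.ofFinite Z
  rw [← Nat.card_congr (Equiv.sigmaFiberEquiv f), Nat.card_sigma,
    Finset.sum_congr rfl fun c' _ => hf c' c]
  simp

end Equidistributed

theorem exists_equidistributed_of_card_dvd [Finite X] [Nonempty X] [Finite Z]
    (h : Nat.card Z ∣ Nat.card X) : ∃ f : X → Z, Equidistributed f := by
  obtain ⟨k, hk⟩ := h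
  have : NeZero k := ⟨right_ne_zero_of_mul (hk ▸ Nat.card_pos.ne')⟩
  obtain ⟨e⟩ : Nonempty (X ≃ Fin k × Z) := Finite.card_eq.mp (by simp [hk, mul_comm])
  exact ⟨fun x => (e x).2, (equidistributed_comp_equiv_iff (f := Prod.snd) e).mpr
    (equidistributed_comp_snd_iff.mpr equidistributed_id)⟩

end Equidistributed

section LeftCosets

variable {G Z : Type*} [Group G]

/-- `f` is equidistributed on each left coset `gK`, parametrized by `K` through `k ↦ g * k`. -/
def EquidistributedOnLeftCosets (f : G → Z) (K : Subgroup G) : Prop :=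
  ∀ g, Equidistributed fun k : K => f (g * k)

theorem equidistributedOnLeftCosets_top {f : G → Z} :
    EquidistributedOnLeftCosets f ⊤ ↔ Equidistributed f := by
  have iff_mul (g : G) :
      (Equidistributed fun k : (⊤ : Subgroup G) => f (g * k)) ↔ Equidistributed f :=
    equidistributed_comp_equiv_iff (Subgroup.topEquiv.toEquiv.trans (Equiv.mulLeft g))
  simp only [EquidistributedOnLeftCosets, iff_mul, forall_const]

namespace EquidistributedOnLeftCosets

theorem of_translates {ι : Type*} [Finite ι] [Nonempty ι] {f : G → Z} {L : Subgroup G} [Finite L]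
    {φ : ι → G} (hφ : ∀ i, φ i ∈ L) (hf : ∀ g, Equidistributed fun i => f (g * φ i)) :
    EquidistributedOnLeftCosets f L := by
  intro g
  let shear : L × ι ≃ ι × L :=
    (Equiv.prodComm L ι).trans ((Equiv.refl ι).prodShear fun i => Equiv.mulRight ⟨φ i, hφ i⟩)
  have h_shear : Equidistributed fun p : L × ι => f (g * (shear p).2) :=
    .of_prod fun l => by simpa [shear, mul_assoc] using hf (g * l)
  exact equidistributed_comp_snd_iff.mp
    ((equidistributed_comp_equiv_iff (f := fun p : ι × L => f (g * p.2)) shear).mp h_shear)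

theorem mono [Finite G] {f : G → Z} {K L : Subgroup G} (hKL : K ≤ L)
    (hf : EquidistributedOnLeftCosets f K) : EquidistributedOnLeftCosets f L :=
  of_translates (fun k : K => hKL k.2) hf

theorem comp_transversal {P : Subgroup G} {S : Set G} (hS : Subgroup.IsComplement S P)
    {f : P → Z} {K : Subgroup P} (hf : EquidistributedOnLeftCosets f K) :
    EquidistributedOnLeftCosets (fun g => f (hS.equiv g).2) (K.map P.subtype) := by
  intro g
  refine (equidistributed_comp_equiv_iff
    (K.equivMapOfInjective P.subtype P.subtype_injective).toEquiv).mp ?_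
  simpa [hS.equiv_mul_right] using hf (hS.equiv g).2

theorem card_mul_card_mul_card_fiber [Finite G] [Finite Z] {X : Type*} [MulAction G X]
    [IsPretransitive G X] {f : G → Z} {a : X}
    (hf : EquidistributedOnLeftCosets f (stabilizer G a)) (b : X) (c : Z) :
    Nat.card X * Nat.card Z * Nat.card {g // f g = c ∧ g • a = b} = Nat.card G := by
  obtain ⟨g₀, rfl⟩ := exists_smul_eq G a b
  let e : {k : stabilizer G a // f (g₀ * k) = c} ≃ {g // f g = c ∧ g • a = g₀ • a} :=
    { toFun k := ⟨g₀ * k, k.2, by rw [mul_smul, k.1.2]⟩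
      invFun g := ⟨⟨g₀⁻¹ * g, by simp [mem_stabilizer_iff, mul_smul, g.2.2]⟩, by simpa using g.2.1⟩
      left_inv _ := by simp
      right_inv _ := by simp }
  rw [← Nat.card_congr e, mul_assoc, (hf g₀).card_mul_card_fiber c,
    ← index_stabilizer_of_transitive G a, Subgroup.index_mul_card]

end EquidistributedOnLeftCosets

end LeftCosets

section BlockDiag

variable {R V : Type*} [Ring R] [AddCommGroup V] [Module R V]

/-- The action on `W` of its stabilizer: the diagonal block complementary to
`LinearEquiv.reduce W`. -/
def restrictStabilizer (W : Submodule R V) : stabilizer (V ≃ₗ[R] V) W →* (W ≃ₗ[R] W) where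
  toFun u := LinearEquiv.ofSubmodules u.val W W u.prop
  map_mul' _ _ := rfl
  map_one' := rfl

variable {W W' : Submodule R V} (h : IsCompl W W') (A : W ≃ₗ[R] W) (B : (V ⧸ W) ≃ₗ[R] (V ⧸ W))

/-- The map acting as `A` on `W` and as `B` on the complement `W'`, identified with `V ⧸ W`. -/
noncomputable def blockDiagEquiv : V ≃ₗ[R] V :=
  (W.prodEquivOfIsCompl W' h).symm ≪≫ₗ
    A.prodCongr ((W.quotientEquivOfIsCompl W' h).symm ≪≫ₗ B ≪≫ₗ W.quotientEquivOfIsCompl W' h) ≪≫ₗ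
    W.prodEquivOfIsCompl W' h

theorem blockDiagEquiv_apply_left (w : W) : blockDiagEquiv h A B w = A w := by
  simp [blockDiagEquiv]

theorem blockDiagEquiv_apply_right (w : W') :
    blockDiagEquiv h A B w = W.quotientEquivOfIsCompl W' h (B (W.mkQ w)) := by
  simp [blockDiagEquiv]

theorem mkQ_blockDiagEquiv_apply (v : V) : W.mkQ (blockDiagEquiv h A B v) = B (W.mkQ v) := by
  obtain ⟨⟨w, w'⟩, rfl⟩ := (W.prodEquivOfIsCompl W' h).surjective v
  have mkQ_coe (x : W) : W.mkQ x = 0 := by simp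
  rw [Submodule.coe_prodEquivOfIsCompl', map_add, map_add, map_add, blockDiagEquiv_apply_left,
    blockDiagEquiv_apply_right, mkQ_coe, mkQ_coe, zero_add, zero_add, Submodule.mkQ_apply,
    Submodule.mk_quotientEquivOfIsCompl_apply]

theorem blockDiagEquiv_mem_stabilizer : blockDiagEquiv h A B ∈ stabilizer (V ≃ₗ[R] V) W := by
  refine le_antisymm ?_ fun w hw => ?_
  · rintro _ ⟨w, hw, rfl⟩
    simp [blockDiagEquiv_apply_left h A B ⟨w, hw⟩]
  · exact ⟨A.symm ⟨w, hw⟩, (A.symm ⟨w, hw⟩).2, by simp [blockDiagEquiv_apply_left]⟩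

/-- `blockDiagEquiv` as an element of the stabilizer of `W`. -/
noncomputable def blockDiag : stabilizer (V ≃ₗ[R] V) W :=
  ⟨blockDiagEquiv h A B, blockDiagEquiv_mem_stabilizer h A B⟩

theorem restrictStabilizer_blockDiag : restrictStabilizer W (blockDiag h A B) = A := by
  ext w
  exact blockDiagEquiv_apply_left h A B w

theorem reduce_blockDiag : LinearEquiv.reduce W (blockDiag h A B) = B := by
  ext z
  obtain ⟨v, rfl⟩ := W.mkQ_surjective z
  exact mkQ_blockDiagEquiv_apply h A B v

variable {h A B}

theorem blockDiag_mem_fixingSubgroup {U : Submodule R V} (hU : U ⊓ W ⊔ U ⊓ W' = U)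
    (hA : A ∈ fixingSubgroup (W ≃ₗ[R] W) (U.comap W.subtype : Set W))
    (hB : B ∈ fixingSubgroup ((V ⧸ W) ≃ₗ[R] (V ⧸ W)) (U.map W.mkQ : Set (V ⧸ W))) :
    blockDiag h A B ∈ fixingSubgroup (stabilizer (V ≃ₗ[R] V) W) (U : Set V) := by
  rw [mem_fixingSubgroup_iff] at hA hB ⊢
  intro u hu
  rw [SetLike.mem_coe, ← hU] at hu
  obtain ⟨w, ⟨hwU, hwW⟩, w', ⟨hwU', hwW'⟩, rfl⟩ := Submodule.mem_sup.mp hu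
  have fix_left : blockDiagEquiv h A B w = w := by
    have hAw : A ⟨w, hwW⟩ = ⟨w, hwW⟩ := hA _ hwU
    rw [blockDiagEquiv_apply_left h A B ⟨w, hwW⟩, hAw]
  have fix_right : blockDiagEquiv h A B w' = w' := by
    have hBw' : B (W.mkQ w') = W.mkQ w' := hB _ ⟨w', hwU', rfl⟩
    rw [blockDiagEquiv_apply_right h A B ⟨w', hwW'⟩, hBw', Submodule.mkQ_apply,
      Submodule.quotientEquivOfIsCompl_apply_mk_right h ⟨w', hwW'⟩]
  exact (map_add (blockDiagEquiv h A B) w w').trans (congrArg₂ (· + ·) fix_left fix_right)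

end BlockDiag

theorem exists_isCompl_inf_sup_inf_eq {α : Type*} [Lattice α] [BoundedOrder α] [IsModularLattice α]
    [ComplementedLattice α] (u w : α) : ∃ w', IsCompl w w' ∧ u ⊓ w ⊔ u ⊓ w' = u := by
  obtain ⟨c, hc⟩ := exists_isCompl (u ⊓ w)
  have hdisj : Disjoint (c ⊓ u) w := by
    rw [disjoint_iff, inf_assoc, inf_comm, hc.inf_eq_bot]
  obtain ⟨w', hle, hw'⟩ := hdisj.exists_isCompl
  refine ⟨w', hw'.symm, le_antisymm (sup_le inf_le_left inf_le_left) ?_⟩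
  calc u = (u ⊓ w ⊔ c) ⊓ u := by rw [hc.sup_eq_top, top_inf_eq]
    _ = u ⊓ w ⊔ c ⊓ u := sup_inf_assoc_of_le c inf_le_left
    _ ≤ u ⊓ w ⊔ u ⊓ w' := sup_le_sup_left (le_inf inf_le_right hle) _

theorem map_subtype_fixingSubgroup_le {G X : Type*} [Group G] [MulAction G X] (P : Subgroup G)
    (s : Set X) : (fixingSubgroup P s).map P.subtype ≤ fixingSubgroup G s := by
  rintro _ ⟨p, hp, rfl⟩
  exact (mem_fixingSubgroup_iff G).mpr ((mem_fixingSubgroup_iff P).mp hp)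

instance finite_linearEquiv {R V : Type*} [Semiring R] [AddCommMonoid V] [Module R V] [Finite V] :
    Finite (V ≃ₗ[R] V) :=
  DFunLike.finite _

section BlockSum

variable {R V Z : Type*} [Ring R] [AddCommGroup V] [Module R V]
  {W U : Submodule R V} {f₁ : (W ≃ₗ[R] W) → Z} {f₂ : ((V ⧸ W) ≃ₗ[R] (V ⧸ W)) → Z}

/-- The function on the stabilizer of `W` that adds the values of `f₁` and `f₂` on the two diagonal
blocks. -/
def blockSum [Add Z] (f₁ : (W ≃ₗ[R] W) → Z) (f₂ : ((V ⧸ W) ≃ₗ[R] (V ⧸ W)) → Z)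
    (p : stabilizer (V ≃ₗ[R] V) W) : Z :=
  f₁ (restrictStabilizer W p) + f₂ (LinearEquiv.reduce W p)

theorem blockSum_mul_blockDiag [Add Z] {W' : Submodule R V} (h : IsCompl W W') (A : W ≃ₗ[R] W)
    (B : (V ⧸ W) ≃ₗ[R] (V ⧸ W)) (p : stabilizer (V ≃ₗ[R] V) W) :
    blockSum f₁ f₂ (p * blockDiag h A B) =
      f₁ (restrictStabilizer W p * A) + f₂ (LinearEquiv.reduce W p * B) := by
  simp only [blockSum, map_mul, restrictStabilizer_blockDiag, reduce_blockDiag]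

variable [Finite V] [IsSemisimpleModule R V] [AddGroup Z]

theorem equidistributedOnLeftCosets_blockSum_of_left
    (hf : EquidistributedOnLeftCosets f₁
      (fixingSubgroup (W ≃ₗ[R] W) (U.comap W.subtype : Set W))) :
    EquidistributedOnLeftCosets (blockSum f₁ f₂)
      (fixingSubgroup (stabilizer (V ≃ₗ[R] V) W) (U : Set V)) := by
  obtain ⟨W', hW', hUW'⟩ := exists_isCompl_inf_sup_inf_eq U W
  refine .of_translates
    (fun A : fixingSubgroup (W ≃ₗ[R] W) (U.comap W.subtype : Set W) =>
      blockDiag_mem_fixingSubgroup (h := hW') hUW' A.2 (one_mem _)) fun p => ?_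
  simp only [blockSum_mul_blockDiag]
  exact (hf _).equiv_comp (Equiv.addRight _)

theorem equidistributedOnLeftCosets_blockSum_of_right
    (hf : EquidistributedOnLeftCosets f₂
      (fixingSubgroup ((V ⧸ W) ≃ₗ[R] (V ⧸ W)) (U.map W.mkQ : Set (V ⧸ W)))) :
    EquidistributedOnLeftCosets (blockSum f₁ f₂)
      (fixingSubgroup (stabilizer (V ≃ₗ[R] V) W) (U : Set V)) := by
  have : Finite (V ⧸ W) := Finite.of_surjective _ W.mkQ_surjective
  obtain ⟨W', hW', hUW'⟩ := exists_isCompl_inf_sup_inf_eq U W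
  refine .of_translates
    (fun B : fixingSubgroup ((V ⧸ W) ≃ₗ[R] (V ⧸ W)) (U.map W.mkQ : Set (V ⧸ W)) =>
      blockDiag_mem_fixingSubgroup (h := hW') hUW' (one_mem _) B.2) fun p => ?_
  simp only [blockSum_mul_blockDiag]
  exact (hf _).equiv_comp (Equiv.addLeft _)

end BlockSum

section Resilient

variable {K V Z : Type*} [DivisionRing K] [AddCommGroup V] [Module K V]

/-- A function on `GL(V)` is `t`-resilient if it is equidistributed on each set of maps with
prescribed values on a subspace of dimension at most `t`; meant for finite-dimensional `V`, as
`finrank` is `0` on infinite-dimensional subspaces. -/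
def IsResilient (f : (V ≃ₗ[K] V) → Z) (t : ℕ) : Prop :=
  ∀ U : Submodule K V, finrank K U ≤ t →
    EquidistributedOnLeftCosets f (fixingSubgroup (V ≃ₗ[K] V) (U : Set V))

theorem IsResilient.equidistributed [Finite V] {f : (V ≃ₗ[K] V) → Z} {t : ℕ}
    (hf : IsResilient f t) : Equidistributed f :=
  equidistributedOnLeftCosets_top.mp ((hf ⊥ (by simp)).mono le_top)

theorem Equidistributed.isResilient_zero [Module.Finite K V] {f : (V ≃ₗ[K] V) → Z}
    (hf : Equidistributed f) : IsResilient f 0 := by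
  intro U hU
  obtain rfl : U = ⊥ := Submodule.finrank_eq_zero.mp (Nat.le_zero.mp hU)
  have fixing_bot : fixingSubgroup (V ≃ₗ[K] V) ((⊥ : Submodule K V) : Set V) = ⊤ := by
    ext g
    simp [mem_fixingSubgroup_iff]
  rw [fixing_bot]
  exact equidistributedOnLeftCosets_top.mpr hf

theorem finrank_comap_subtype_add_finrank_map_mkQ (U W : Submodule K V) [Module.Finite K U] :
    finrank K (U.comap W.subtype) + finrank K (U.map W.mkQ) = finrank K U := by
  have h_ker : finrank K (W.mkQ.domRestrict U).ker = finrank K (U.comap W.subtype) := by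
    rw [← Submodule.finrank_map_subtype_eq, ← Submodule.finrank_map_subtype_eq W,
      Submodule.map_comap_subtype, LinearMap.ker_domRestrict, Submodule.ker_mkQ,
      Submodule.map_comap_subtype, inf_comm]
  rw [← LinearMap.range_domRestrict, add_comm, ← h_ker, LinearMap.finrank_range_add_finrank_ker]

theorem IsResilient.exists_add_add_one [Finite V] [AddGroup Z] {W : Submodule K V} {s₁ s₂ : ℕ}
    {f₁ : (W ≃ₗ[K] W) → Z} (h₁ : IsResilient f₁ s₁)
    {f₂ : ((V ⧸ W) ≃ₗ[K] (V ⧸ W)) → Z} (h₂ : IsResilient f₂ s₂) :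
    ∃ f : (V ≃ₗ[K] V) → Z, IsResilient f (s₁ + s₂ + 1) := by
  obtain ⟨S, hS, -⟩ := (stabilizer (V ≃ₗ[K] V) W).exists_isComplement_left 1
  refine ⟨fun g => blockSum f₁ f₂ (hS.equiv g).2, fun U hU => ?_⟩
  have h_finrank := finrank_comap_subtype_add_finrank_map_mkQ U W
  have h_block : EquidistributedOnLeftCosets (blockSum f₁ f₂)
      (fixingSubgroup (stabilizer (V ≃ₗ[K] V) W) (U : Set V)) := by
    obtain h | h : finrank K (U.comap W.subtype) ≤ s₁ ∨ finrank K (U.map W.mkQ) ≤ s₂ := by omega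
    · exact equidistributedOnLeftCosets_blockSum_of_left (h₁ _ h)
    · exact equidistributedOnLeftCosets_blockSum_of_right (h₂ _ h)
  exact (h_block.comp_transversal hS).mono (map_subtype_fixingSubgroup_le _ _)

end Resilient

section FiniteField

variable {F : Type*} [Field F] {V : Type*} [AddCommGroup V] [Module F V]

theorem exists_submodule_finrank_eq {R M : Type*} [Ring R] [Nontrivial R]
    [StrongRankCondition R] [AddCommGroup M] [Module R M] {k : ℕ} (hk : k ≤ finrank R M) :
    ∃ W : Submodule R M, finrank R W = k := by
  obtain ⟨v, hv⟩ := exists_linearIndependent_of_le_finrank hk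
  exact ⟨_, by simpa using finrank_span_eq_card hv⟩

theorem card_pow_dvd_card_linearEquiv [Finite F] {m : ℕ} (hm : m < finrank F V) :
    Nat.card F ^ m ∣ Nat.card (V ≃ₗ[F] V) := by
  have := Fintype.ofFinite F
  have := Module.finite_of_finrank_pos (Nat.zero_lt_of_lt hm)
  rw [← Nat.card_congr (LinearMap.GeneralLinearGroup.generalLinearEquiv F V).toEquiv,
    ← Nat.card_congr (Matrix.GeneralLinearGroup.toLin' (finBasis F V)).toEquiv,
    Matrix.card_GL_field, Nat.card_eq_fintype_card]
  refine dvd_trans ?_ (Finset.dvd_prod_of_mem _ (Finset.mem_univ ⟨m, hm⟩))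
  exact Nat.dvd_sub (pow_dvd_pow _ hm.le) dvd_rfl

theorem finite_of_finrank_pos_of_finite [Finite F] (h : 0 < finrank F V) : Finite V :=
  have := Module.finite_of_finrank_pos h
  Module.finite_of_finite F

theorem exists_equidistributed_linearEquiv [Finite F] {m : ℕ} (hm : m < finrank F V) :
    ∃ f : (V ≃ₗ[F] V) → Fin m → F, Equidistributed f := by
  have := finite_of_finrank_pos_of_finite (Nat.zero_lt_of_lt hm)
  exact exists_equidistributed_of_card_dvd (by
    rw [Nat.card_fun, Nat.card_fin]
    exact card_pow_dvd_card_linearEquiv hm)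

theorem exists_isResilient [Finite F] {m t : ℕ} (h : (t + 1) * (m + 1) ≤ finrank F V) :
    ∃ f : (V ≃ₗ[F] V) → Fin m → F, IsResilient f t := by
  induction t generalizing V with
  | zero =>
    have := Module.finite_of_finrank_pos ((Nat.mul_pos Nat.one_pos m.succ_pos).trans_le h)
    obtain ⟨f, hf⟩ := exists_equidistributed_linearEquiv (F := F) (V := V) (m := m) (by omega)
    exact ⟨f, hf.isResilient_zero⟩
  | succ t ih =>
    have := finite_of_finrank_pos_of_finite
      ((Nat.mul_pos (t + 1).succ_pos m.succ_pos).trans_le h)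
    obtain ⟨W, hW⟩ := exists_submodule_finrank_eq (Nat.sub_le (finrank F V) (m + 1))
    have h_quot := W.finrank_quotient_add_finrank
    rw [add_one_mul (t + 1)] at h
    obtain ⟨f₁, h₁⟩ := ih (V := W) (by omega)
    obtain ⟨f₂, h₂⟩ := exists_equidistributed_linearEquiv (F := F) (V := V ⧸ W) (m := m) (by omega)
    exact h₁.exists_add_add_one h₂.isResilient_zero

end FiniteField

section Designs

variable (K V : Type*) [DivisionRing K] [AddCommGroup V] [Module K V]

/-- The linearly independent families in `V` indexed by `ι`, as an invariant subset for the
componentwise action of `GL(V)`. -/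
def linearIndependentFamilies (ι : Type*) : SubMulAction (V ≃ₗ[K] V) (ι → V) where
  carrier := {a | LinearIndependent K a}
  smul_mem' g _ ha := ha.map' g.toLinearMap g.ker

instance isPretransitive_linearIndependentFamilies (ι : Type*) [Finite ι] :
    IsPretransitive (V ≃ₗ[K] V) (linearIndependentFamilies K V ι) where
  exists_smul_eq := by
    rintro ⟨a, ha : LinearIndependent K a⟩ ⟨b, hb : LinearIndependent K b⟩
    have : Module.Finite K (Submodule.span K (Set.range a)) :=
      FiniteDimensional.span_of_finite K (Set.finite_range a)
    obtain ⟨g, hg⟩ := Submodule.exists_linearEquiv_restrict_eq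
      (ha.linearCombinationEquiv.symm ≪≫ₗ hb.linearCombinationEquiv)
    refine ⟨g, Subtype.ext (funext fun i => ?_)⟩
    simpa using (hg (ha.linearCombinationEquiv (Finsupp.single i 1))).symm

variable {K V}

theorem stabilizer_eq_fixingSubgroup_span {ι : Type*} (a : ι → V) :
    stabilizer (V ≃ₗ[K] V) a =
      fixingSubgroup (V ≃ₗ[K] V) (Submodule.span K (Set.range a) : Set V) := by
  ext g
  have span_le_iff := Submodule.span_le (s := Set.range a)
    (p := LinearMap.fixedSubmodule (g : V →ₗ[K] V))
  simpa [mem_stabilizer_iff, funext_iff, mem_fixingSubgroup_iff, SetLike.le_def,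
    Set.range_subset_iff] using span_le_iff.symm

theorem IsResilient.exists_forall_card_eq [Finite V] {Z : Type*} [Finite Z] {t : ℕ}
    {f : (V ≃ₗ[K] V) → Z} (hf : IsResilient f t) (c : Z) :
    ∃ r : ℕ, ∀ a b : Fin t → V, LinearIndependent K a → LinearIndependent K b →
      Nat.card {g : V ≃ₗ[K] V // f g = c ∧ g • a = b} = r := by
  let X := linearIndependentFamilies K V (Fin t)
  refine ⟨Nat.card (V ≃ₗ[K] V) / (Nat.card X * Nat.card Z), fun a b ha hb => ?_⟩
  have h_stab : EquidistributedOnLeftCosets f (stabilizer (V ≃ₗ[K] V) (⟨a, ha⟩ : X)) := by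
    rw [SubMulAction.stabilizer_of_subMul, stabilizer_eq_fixingSubgroup_span]
    exact hf _ ((finrank_range_le_card a).trans_eq (Fintype.card_fin t))
  have : Nonempty X := ⟨⟨a, ha⟩⟩
  have : Nonempty Z := ⟨c⟩
  refine Nat.eq_div_of_mul_eq_right (mul_pos Nat.card_pos Nat.card_pos).ne' ?_
  simpa [Subtype.ext_iff] using h_stab.card_mul_card_mul_card_fiber ⟨b, hb⟩ c

theorem exists_isTDesignGL_card_pow_mul_card_eq (F : Type) [Field F] [Fintype F] {m n t : ℕ}
    (h : (t + 1) * (m + 1) ≤ n) : ∃ Y : Set (GL (Fin n) F), IsTDesignGL F n t Y ∧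
      Nat.card F ^ m * Nat.card Y = Nat.card (GL (Fin n) F) := by
  obtain ⟨f, hf⟩ := exists_isResilient (F := F) (V := Fin n → F) (by simpa using h)
  let e : GL (Fin n) F ≃* ((Fin n → F) ≃ₗ[F] (Fin n → F)) :=
    Matrix.GeneralLinearGroup.toLin.trans (LinearMap.GeneralLinearGroup.generalLinearEquiv F _)
  refine ⟨{g | f (e g) = 0}, ?_, ?_⟩
  · obtain ⟨r, hr⟩ := hf.exists_forall_card_eq 0
    refine ⟨r, fun a b ha hb => ?_⟩
    rw [← hr a b ha hb]
    exact Nat.card_congr (e.toEquiv.subtypeEquiv fun g => and_congr_right fun _ => funext_iff.symm)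
  · have h_equi := (equidistributed_comp_equiv_iff e.toEquiv).mpr hf.equidistributed
    have h_card := h_equi.card_mul_card_fiber 0
    rw [Nat.card_fun, Nat.card_fin] at h_card
    exact h_card

end Designs

/-- For every fixed `t ≥ 1` and `ε > 0`, for all sufficiently large `n` there exists a
nonempty `t`-design `Y` in `GL(n,q)` with `|Y|/|GL(n,q)| < ε`. -/
theorem statement6 (q : ℕ) (hq : IsPrimePow q) (F : Type) [Field F] [Fintype F]
    (hF : Fintype.card F = q) (t : ℕ) (ht : 0 < t) (ε : ℝ) (hε : 0 < ε) :
    ∃ N : ℕ, ∀ n, N ≤ n → ∃ Y : Set (GL (Fin n) F), Y.Nonempty ∧ IsTDesignGL F n t Y ∧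
      (Nat.card Y : ℝ) < ε * (Nat.card (GL (Fin n) F) : ℝ) := by
  obtain ⟨m, hm⟩ : ∃ m : ℕ, ε⁻¹ < (q : ℝ) ^ m :=
    pow_unbounded_of_one_lt ε⁻¹ (mod_cast hq.one_lt)
  refine ⟨(t + 1) * (m + 1), fun n hn => ?_⟩
  obtain ⟨Y, hY, hcard⟩ := exists_isTDesignGL_card_pow_mul_card_eq F hn
  rw [Nat.card_eq_fintype_card (α := F), hF] at hcard
  have hpos : 0 < Nat.card Y := Nat.pos_of_mul_pos_left (hcard ▸ Nat.card_pos)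
  refine ⟨Y, Set.nonempty_coe_sort.mp (Nat.card_pos_iff.mp hpos).1, hY, ?_⟩
  calc (Nat.card Y : ℝ) < ε * (q : ℝ) ^ m * Nat.card Y :=
        lt_mul_of_one_lt_left (mod_cast hpos) ((inv_lt_iff_one_lt_mul₀' hε).mp hm)
    _ = ε * Nat.card (GL (Fin n) F) := by rw [← hcard]; push_cast; ring
end
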